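/- arXiv:1908.11093 — 2 statements merged into one kernel-verified Lean document; each statement's English description precedes it below -/
import Mathlib

section
/- Let D be the unit disk, λ > 1/|D|, ε = (πλ)^{-1/2}. The maximum of ℰ over K_λ(D) satisfies sup_{K_λ(D)} ℰ = -(1/4π) ln ε + O(1) as λ → +∞: there exists C > 0 independent of λ such that -(1/4π)ln ε - C ≤ sup_{K_λ(D)} ℰ ≤ -(1/4π)ln ε + C. -/
open MeasureTheory Real Set Filter Topology ENNReal
noncomputable section
abbrev E2 := EuclideanSpace ℝ (Fin 2)
def diskD : Set E2 := Metric.ball 0 1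
def greenh (x y : E2) : ℝ := -(1/(2*π)) * Real.log ‖y‖ - (1/(2*π)) * Real.log ‖x - (‖y‖^2)⁻¹ • y‖
def greenG (x y : E2) : ℝ := -(1/(2*π)) * Real.log ‖x - y‖ - greenh x y
def muD : Measure E2 := volume.restrict diskD
def Kset (lam : ℝ) : Set (E2 → ℝ) :=
  {w | AEMeasurable w muD ∧ (∀ᵐ x ∂muD, 0 ≤ w x ∧ w x ≤ lam) ∧ ∫ x, w x ∂muD = 1}
def Efun (w : E2 → ℝ) : ℝ := (1/2) * ∫ x in diskD, ∫ y in diskD, greenG x y * w x * w y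
def calE (Ω : ℝ) (w : E2 → ℝ) : ℝ := Efun w + (Ω/2) * ∫ x in diskD, ‖x‖^2 * w x

/-!
By the method of images, the Green function of the unit disk is
`G(x, y) = (2π)⁻¹ log (A(x, y) / |x - y|)` with
`A(x, y)² = 1 - 2⟨x, y⟩ + |x|² |y|² = |x - y|² + (1 - |x|²) (1 - |y|²)`.
Since `A ≤ 2`, cutting the logarithm at scale `ε`, where `π ε² λ = 1`, bounds the potential of every
admissible vorticity by `(2π)⁻¹ (- log ε + O(1))`: the part of the kernel above the cut has integral
`O(ε²)`, and `w ≤ λ = O(ε⁻²)`. This replaces the rearrangement inequality. Conversely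
`|x - y| ≤ 2 ε A(x, y)` on the ball of radius `ε ≤ 1`, so the potential of the circular patch
`λ 1_{B_ε(0)}` is at least `(2π)⁻¹ (- log ε - log 2)` on the patch. The energy is half the average
of the potential against `w`, up to the term in `Ω`, which is at most `|Ω| / 2`.
-/

open scoped InnerProductSpace

section ImageDist

variable {E : Type*} [NormedAddCommGroup E] [InnerProductSpace ℝ E]

/-- The distance from `x` to the mirror image `y / ‖y‖²` of `y` in the unit sphere, multiplied by
`‖y‖`. It is the numerator in the method of images; in this symmetric form it is also meaningful at
`y = 0`. -/
def imageDist (x y : E) : ℝ := √(1 - 2 * ⟪x, y⟫_ℝ + ‖x‖ ^ 2 * ‖y‖ ^ 2)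

lemma norm_mul_norm_sub_inv_smul {y : E} (hy : y ≠ 0) (x : E) :
    ‖y‖ * ‖x - (‖y‖ ^ 2)⁻¹ • y‖ = imageDist x y := by
  have hy' : ‖y‖ ≠ 0 := norm_ne_zero_iff.mpr hy
  rw [imageDist, ← Real.sqrt_sq (by positivity : 0 ≤ ‖y‖ * ‖x - (‖y‖ ^ 2)⁻¹ • y‖), mul_pow,
    norm_sub_sq_real, inner_smul_right, norm_smul, norm_inv, norm_pow, norm_norm]
  congr 1
  field_simp
  ring

lemma imageDist_nonneg (x y : E) : 0 ≤ imageDist x y := Real.sqrt_nonneg _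

lemma imageDist_sq (x y : E) :
    imageDist x y ^ 2 = ‖x - y‖ ^ 2 + (1 - ‖x‖ ^ 2) * (1 - ‖y‖ ^ 2) := by
  have h_radicand : (1 - ‖x‖ * ‖y‖) ^ 2 ≤ 1 - 2 * ⟪x, y⟫_ℝ + ‖x‖ ^ 2 * ‖y‖ ^ 2 := by
    linarith [real_inner_le_norm x y]
  rw [imageDist, Real.sq_sqrt ((sq_nonneg _).trans h_radicand), norm_sub_sq_real]
  ring

lemma imageDist_le (x y : E) : imageDist x y ≤ 1 + ‖x‖ * ‖y‖ := by
  refine Real.sqrt_le_iff.mpr ⟨by positivity, ?_⟩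
  linarith [neg_le_of_abs_le (abs_real_inner_le_norm x y)]

lemma imageDist_pos {x y : E} (hx : ‖x‖ < 1) (hy : ‖y‖ < 1) : 0 < imageDist x y := by
  have hx' : 0 < 1 - ‖x‖ ^ 2 := by nlinarith [norm_nonneg x]
  have hy' : 0 < 1 - ‖y‖ ^ 2 := by nlinarith [norm_nonneg y]
  refine lt_of_pow_lt_pow_left₀ 2 (imageDist_nonneg x y) ?_
  rw [imageDist_sq, zero_pow two_ne_zero]
  positivity

lemma one_add_sq_mul_norm_sub_le {x y : E} {r : ℝ} (hr : r ≤ 1) (hx : ‖x‖ ≤ r) (hy : ‖y‖ ≤ r) :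
    (1 + r ^ 2) * ‖x - y‖ ≤ 2 * r * imageDist x y := by
  have hr0 : 0 ≤ r := (norm_nonneg x).trans hx
  have h_norm : ‖x - y‖ ^ 2 ≤ (2 * r) ^ 2 := by
    gcongr
    linarith [norm_sub_le x y]
  have h_prod : (1 - r ^ 2) ^ 2 ≤ (1 - ‖x‖ ^ 2) * (1 - ‖y‖ ^ 2) := by
    have hr1 : 0 ≤ 1 - r ^ 2 := sub_nonneg.mpr (pow_le_one₀ hr0 hr)
    rw [sq (1 - r ^ 2)]
    have hx1 : ‖x‖ ^ 2 ≤ r ^ 2 := by gcongr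
    gcongr
    linarith
  have h_nonneg : 0 ≤ 2 * r * imageDist x y := by have := imageDist_nonneg x y; positivity
  refine (sq_le_sq₀ (by positivity) h_nonneg).mp ?_
  calc ((1 + r ^ 2) * ‖x - y‖) ^ 2
      = (2 * r) ^ 2 * ‖x - y‖ ^ 2 + ‖x - y‖ ^ 2 * (1 - r ^ 2) ^ 2 := by ring
    _ ≤ (2 * r) ^ 2 * ‖x - y‖ ^ 2 + (2 * r) ^ 2 * ((1 - ‖x‖ ^ 2) * (1 - ‖y‖ ^ 2)) := by gcongr
    _ = (2 * r * imageDist x y) ^ 2 := by rw [mul_pow _ (imageDist x y), imageDist_sq]; ring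

lemma norm_sub_le_imageDist {x y : E} (hx : ‖x‖ ≤ 1) (hy : ‖y‖ ≤ 1) :
    ‖x - y‖ ≤ imageDist x y := by
  linarith [one_add_sq_mul_norm_sub_le le_rfl hx hy]

lemma norm_sub_le_two_mul_imageDist {x y : E} {r : ℝ} (hr : r ≤ 1) (hx : ‖x‖ ≤ r)
    (hy : ‖y‖ ≤ r) : ‖x - y‖ ≤ 2 * r * imageDist x y :=
  (le_mul_of_one_le_left (norm_nonneg _) (by linarith [sq_nonneg r])).trans
    (one_add_sq_mul_norm_sub_le hr hx hy)

end ImageDist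

lemma neg_log_le_neg_log_add_posLog {r s : ℝ} (hr : 0 < r) (hr1 : r ≤ 1) :
    -Real.log s ≤ -Real.log r + log⁺ (r⁻¹ * s)⁻¹ := by
  have hr_log : log⁺ r⁻¹ = -Real.log r := by
    rw [posLog_eq_log, Real.log_inv]
    exact (one_le_inv₀ hr).mpr hr1 |>.trans (le_abs_self _)
  calc -Real.log s = Real.log s⁻¹ := (Real.log_inv s).symm
    _ ≤ log⁺ s⁻¹ := le_max_right _ _
    _ = log⁺ (r⁻¹ * (r⁻¹ * s)⁻¹) := by congr 1; field_simp
    _ ≤ -Real.log r + log⁺ (r⁻¹ * s)⁻¹ := hr_log ▸ posLog_mul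

section LogSingularity

variable {E : Type*} [NormedAddCommGroup E] [NormedSpace ℝ E] [FiniteDimensional ℝ E]
  [MeasurableSpace E] [BorelSpace E] (μ : Measure E) [μ.IsAddHaarMeasure]

lemma integrable_posLog_inv_norm [Nontrivial E] : Integrable (fun z : E ↦ log⁺ ‖z‖⁻¹) μ := by
  have h_support : Function.support (fun z : E ↦ log⁺ ‖z‖⁻¹) ⊆ Metric.ball 0 1 := fun z hz ↦ by
    by_contra h
    refine hz ((posLog_eq_zero_iff _).mpr ?_)
    rw [abs_inv, abs_norm]
    exact inv_le_one_of_one_le₀ (by simpa using h)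
  have h_log : IntegrableOn (fun r ↦ ‖Real.log r‖) (Ioo 0 1) :=
    ((intervalIntegrable_iff_integrableOn_Ioo_of_le zero_le_one).mp
      intervalIntegral.intervalIntegrable_log').norm
  rw [← integrableOn_iff_integrable_of_support_subset h_support,
    integrableOn_fun_norm_addHaar μ (f := fun r ↦ log⁺ r⁻¹)]
  refine h_log.mono' (by fun_prop) ((ae_restrict_mem measurableSet_Ioo).mono fun r hr ↦ ?_)
  have h_pow : r ^ (Module.finrank ℝ E - 1) ≤ 1 := pow_le_one₀ hr.1.le hr.2.le
  calc ‖r ^ (Module.finrank ℝ E - 1) • log⁺ r⁻¹‖ = r ^ (Module.finrank ℝ E - 1) * log⁺ r⁻¹ := by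
        rw [smul_eq_mul, Real.norm_of_nonneg (mul_nonneg (pow_nonneg hr.1.le _) posLog_nonneg)]
    _ ≤ log⁺ r⁻¹ := mul_le_of_le_one_left posLog_nonneg h_pow
    _ ≤ |Real.log r⁻¹| := max_le (abs_nonneg _) (le_abs_self _)
    _ = ‖Real.log r‖ := by rw [Real.log_inv, abs_neg, Real.norm_eq_abs]

lemma integrable_posLog_inv_norm_smul_sub [Nontrivial E] {r : ℝ} (hr : r ≠ 0) (x : E) :
    Integrable (fun y ↦ log⁺ ‖r⁻¹ • (x - y)‖⁻¹) μ :=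
  ((integrable_posLog_inv_norm μ).comp_smul (inv_ne_zero hr)).comp_sub_left x

lemma integral_posLog_inv_norm_smul_sub {r : ℝ} (hr : 0 ≤ r) (x : E) :
    ∫ y, log⁺ ‖r⁻¹ • (x - y)‖⁻¹ ∂μ = r ^ Module.finrank ℝ E * ∫ z, log⁺ ‖z‖⁻¹ ∂μ := by
  rw [integral_sub_left_eq_self (fun y ↦ log⁺ ‖r⁻¹ • y‖⁻¹) μ x,
    Measure.integral_comp_inv_smul_of_nonneg μ (fun y ↦ log⁺ ‖y‖⁻¹) hr, smul_eq_mul]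

lemma setIntegral_posLog_inv_norm_smul_sub_mul_le [Nontrivial E] {s : Set E} {w : E → ℝ}
    {r c : ℝ} (hr : 0 < r) (hc : 0 ≤ c) (hw : ∀ᵐ y ∂μ.restrict s, 0 ≤ w y ∧ w y ≤ c) (x : E) :
    ∫ y in s, log⁺ ‖r⁻¹ • (x - y)‖⁻¹ * w y ∂μ ≤
      c * (r ^ Module.finrank ℝ E * ∫ z, log⁺ ‖z‖⁻¹ ∂μ) := by
  have h_int := integrable_posLog_inv_norm_smul_sub μ hr.ne' x
  calc ∫ y in s, log⁺ ‖r⁻¹ • (x - y)‖⁻¹ * w y ∂μ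
      ≤ ∫ y in s, log⁺ ‖r⁻¹ • (x - y)‖⁻¹ * c ∂μ :=
        integral_mono_of_nonneg (hw.mono fun y hy ↦ mul_nonneg posLog_nonneg hy.1)
          (h_int.mul_const c).integrableOn
          (hw.mono fun y hy ↦ mul_le_mul_of_nonneg_left hy.2 posLog_nonneg)
    _ = c * ∫ y in s, log⁺ ‖r⁻¹ • (x - y)‖⁻¹ ∂μ := by rw [integral_mul_const, mul_comm]
    _ ≤ c * ∫ y, log⁺ ‖r⁻¹ • (x - y)‖⁻¹ ∂μ :=
        mul_le_mul_of_nonneg_left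
          (setIntegral_le_integral h_int (ae_of_all _ fun _ ↦ posLog_nonneg)) hc
    _ = c * (r ^ Module.finrank ℝ E * ∫ z, log⁺ ‖z‖⁻¹ ∂μ) := by
        rw [integral_posLog_inv_norm_smul_sub μ hr.le]

end LogSingularity

lemma measurable_uncurry_greenG : Measurable (Function.uncurry greenG) := by
  unfold Function.uncurry greenG greenh
  fun_prop

lemma mem_diskD {x : E2} : x ∈ diskD ↔ ‖x‖ < 1 := by
  rw [diskD, mem_ball_zero_iff]

instance : IsFiniteMeasure muD := ⟨by
  rw [muD, Measure.restrict_apply_univ]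
  exact measure_ball_lt_top⟩

lemma ae_mem_diskD : ∀ᵐ x ∂muD, x ∈ diskD :=
  ae_restrict_mem Metric.isOpen_ball.measurableSet

lemma ae_muD_ne (x : E2) : ∀ᵐ y ∂muD, y ≠ x :=
  ae_restrict_of_ae (Measure.ae_ne volume x)

-- Since `log 0 = 0`, `greenh x 0` is a junk value, and so is `greenG x x`.
section Pointwise

variable {x y : E2} (hx : x ∈ diskD) (hy : y ∈ diskD) (hy0 : y ≠ 0)

include hx hy hy0

lemma greenG_eq_log_imageDist_sub_log_norm :
    greenG x y = 1 / (2 * π) * (Real.log (imageDist x y) - Real.log ‖x - y‖) := by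
  have h_pos : ‖y‖ * ‖x - (‖y‖ ^ 2)⁻¹ • y‖ ≠ 0 := by
    rw [norm_mul_norm_sub_inv_smul hy0]
    exact (imageDist_pos (mem_diskD.mp hx) (mem_diskD.mp hy)).ne'
  rw [← norm_mul_norm_sub_inv_smul hy0,
    Real.log_mul (left_ne_zero_of_mul h_pos) (right_ne_zero_of_mul h_pos), greenG, greenh]
  ring

lemma neg_log_le_greenG {c : ℝ} (hxy : y ≠ x) (hc : 0 < c) (h : ‖x - y‖ ≤ c * imageDist x y) :
    1 / (2 * π) * -Real.log c ≤ greenG x y := by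
  have h_image := imageDist_pos (mem_diskD.mp hx) (mem_diskD.mp hy)
  have h_log := Real.log_le_log (norm_pos_iff.mpr (sub_ne_zero.mpr hxy.symm)) h
  rw [Real.log_mul hc.ne' h_image.ne'] at h_log
  rw [greenG_eq_log_imageDist_sub_log_norm hx hy hy0]
  gcongr
  linarith

lemma greenG_nonneg (hxy : y ≠ x) : 0 ≤ greenG x y := by
  have h := norm_sub_le_imageDist (mem_diskD.mp hx).le (mem_diskD.mp hy).le
  simpa only [Real.log_one, neg_zero, mul_zero] using
    neg_log_le_greenG hx hy hy0 hxy one_pos (h.trans_eq (one_mul _).symm)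

lemma greenG_le {r : ℝ} (hr : 0 < r) (hr1 : r ≤ 1) :
    greenG x y ≤ 1 / (2 * π) * (Real.log 2 - Real.log r + log⁺ ‖r⁻¹ • (x - y)‖⁻¹) := by
  have hx1 := mem_diskD.mp hx
  have hy1 := mem_diskD.mp hy
  have h_image : imageDist x y ≤ 2 := by
    linarith [imageDist_le x y, mul_le_one₀ hx1.le (norm_nonneg y) hy1.le]
  have h_log_image := Real.log_le_log (imageDist_pos hx1 hy1) h_image
  have h_log_norm := neg_log_le_neg_log_add_posLog (s := ‖x - y‖) hr hr1
  rw [greenG_eq_log_imageDist_sub_log_norm hx hy hy0, norm_smul,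
    Real.norm_of_nonneg (inv_nonneg.mpr hr.le)]
  gcongr
  linarith

end Pointwise

lemma ae_greenG_nonneg {x : E2} (hx : x ∈ diskD) : ∀ᵐ y ∂muD, 0 ≤ greenG x y := by
  filter_upwards [ae_mem_diskD, ae_muD_ne 0, ae_muD_ne x] with y hy hy0 hyx
  exact greenG_nonneg hx hy hy0 hyx

lemma ae_greenG_le {x : E2} {r : ℝ} (hx : x ∈ diskD) (hr : 0 < r) (hr1 : r ≤ 1) : ∀ᵐ y ∂muD,
    greenG x y ≤ 1 / (2 * π) * (Real.log 2 - Real.log r + log⁺ ‖r⁻¹ • (x - y)‖⁻¹) := by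
  filter_upwards [ae_mem_diskD, ae_muD_ne 0] with y hy hy0
  exact greenG_le hx hy hy0 hr hr1

lemma integrable_greenG {x : E2} (hx : x ∈ diskD) : Integrable (greenG x) muD := by
  have h_sing : Integrable (fun y ↦ log⁺ ‖(1 : ℝ)⁻¹ • (x - y)‖⁻¹) muD :=
    (integrable_posLog_inv_norm_smul_sub volume one_ne_zero x).integrableOn
  refine (((integrable_const (Real.log 2 - Real.log 1)).add h_sing).const_mul (1 / (2 * π))).mono'
    measurable_uncurry_greenG.of_uncurry_left.aestronglyMeasurable ?_
  filter_upwards [ae_greenG_nonneg hx, ae_greenG_le hx one_pos le_rfl] with y h_nonneg h_le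
  rwa [Real.norm_of_nonneg h_nonneg]

/-- The mass `∫ log⁺ (1 / |z|) dz` of the logarithmic singularity of the Green function in the
plane, cut off at scale one. -/
def logMass : ℝ := ∫ z : E2, log⁺ ‖z‖⁻¹

lemma logMass_nonneg : 0 ≤ logMass := integral_nonneg fun _ ↦ posLog_nonneg

/-- The stream function `𝒢w = ∫_D G(·, y) w(y) dy` of the vorticity `w`. -/
def greenPotential (w : E2 → ℝ) (x : E2) : ℝ := ∫ y, greenG x y * w y ∂muD

lemma Efun_eq (w : E2 → ℝ) : Efun w = 1 / 2 * ∫ x, w x * greenPotential w x ∂muD := by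
  simp only [Efun, greenPotential, ← integral_const_mul, muD]
  congr! 5
  ring

lemma aestronglyMeasurable_greenPotential {w : E2 → ℝ} (hw : AEMeasurable w muD) :
    AEStronglyMeasurable (greenPotential w) muD :=
  (measurable_uncurry_greenG.aemeasurable.mul
    hw.comp_snd).aestronglyMeasurable.integral_prod_right'

section Admissible

variable {lam : ℝ} {w : E2 → ℝ} (hw : w ∈ Kset lam)

include hw

lemma nonneg_of_mem_Kset : 0 ≤ lam := by
  have : NeZero muD := ⟨fun h ↦ by simpa [h] using hw.2.2⟩
  obtain ⟨x, h_nonneg, h_le⟩ := hw.2.1.exists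
  exact h_nonneg.trans h_le

lemma ae_nonneg_of_mem_Kset : ∀ᵐ x ∂muD, 0 ≤ w x := hw.2.1.mono fun _ h ↦ h.1

lemma ae_norm_le_of_mem_Kset : ∀ᵐ x ∂muD, ‖w x‖ ≤ lam :=
  hw.2.1.mono fun _ h ↦ (Real.norm_of_nonneg h.1).trans_le h.2

lemma integrable_of_mem_Kset : Integrable w muD :=
  .of_integral_ne_zero (hw.2.2 ▸ one_ne_zero)

lemma integrable_greenG_mul {x : E2} (hx : x ∈ diskD) :
    Integrable (fun y ↦ greenG x y * w y) muD :=
  (integrable_greenG hx).mul_bdd hw.1.aestronglyMeasurable (ae_norm_le_of_mem_Kset hw)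

lemma greenPotential_nonneg {x : E2} (hx : x ∈ diskD) : 0 ≤ greenPotential w x := by
  refine integral_nonneg_of_ae ?_
  filter_upwards [ae_greenG_nonneg hx, ae_nonneg_of_mem_Kset hw] with y h_green h_w
  exact mul_nonneg h_green h_w

lemma greenPotential_le {x : E2} {r : ℝ} (hx : x ∈ diskD) (hr : 0 < r) (hr1 : r ≤ 1) :
    greenPotential w x ≤
      1 / (2 * π) * (Real.log 2 - Real.log r + lam * (r ^ 2 * logMass)) := by
  set k : E2 → ℝ := fun y ↦ log⁺ ‖r⁻¹ • (x - y)‖⁻¹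
  have h_int := integrable_of_mem_Kset hw
  have hk_int : Integrable (fun y ↦ k y * w y) muD :=
    (integrable_posLog_inv_norm_smul_sub volume hr.ne' x).integrableOn.mul_bdd
      hw.1.aestronglyMeasurable (ae_norm_le_of_mem_Kset hw)
  have hk_le : ∫ y, k y * w y ∂muD ≤ lam * (r ^ 2 * logMass) := by
    have h := setIntegral_posLog_inv_norm_smul_sub_mul_le volume hr (nonneg_of_mem_Kset hw) hw.2.1 x
    rwa [finrank_euclideanSpace_fin] at h
  calc greenPotential w x
      ≤ ∫ y, 1 / (2 * π) * ((Real.log 2 - Real.log r) * w y + k y * w y) ∂muD := by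
        refine integral_mono_ae (integrable_greenG_mul hw hx)
          (((h_int.const_mul _).add hk_int).const_mul _) ?_
        filter_upwards [ae_greenG_le hx hr hr1, ae_nonneg_of_mem_Kset hw] with y h_green h_w
        rw [← add_mul, ← mul_assoc]
        exact mul_le_mul_of_nonneg_right h_green h_w
    _ = 1 / (2 * π) * (Real.log 2 - Real.log r + ∫ y, k y * w y ∂muD) := by
        rw [integral_const_mul, integral_add (h_int.const_mul _) hk_int, integral_const_mul,
          hw.2.2, mul_one]
    _ ≤ 1 / (2 * π) * (Real.log 2 - Real.log r + lam * (r ^ 2 * logMass)) := by gcongr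

lemma integrable_mul_greenPotential : Integrable (fun x ↦ w x * greenPotential w x) muD := by
  refine (integrable_of_mem_Kset hw).mul_bdd (aestronglyMeasurable_greenPotential hw.1) ?_
    (c := 1 / (2 * π) * (Real.log 2 - Real.log 1 + lam * (1 ^ 2 * logMass)))
  filter_upwards [ae_mem_diskD] with x hx
  rw [Real.norm_of_nonneg (greenPotential_nonneg hw hx)]
  exact greenPotential_le hw hx one_pos le_rfl

lemma Efun_le_of_greenPotential_le {c : ℝ} (h : ∀ x ∈ diskD, greenPotential w x ≤ c) :
    Efun w ≤ 1 / 2 * c := by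
  rw [Efun_eq]
  gcongr
  calc ∫ x, w x * greenPotential w x ∂muD ≤ ∫ x, w x * c ∂muD := by
        refine integral_mono_ae (integrable_mul_greenPotential hw)
          ((integrable_of_mem_Kset hw).mul_const c) ?_
        filter_upwards [ae_mem_diskD, ae_nonneg_of_mem_Kset hw] with x hx h_w
        exact mul_le_mul_of_nonneg_left (h x hx) h_w
    _ = c := by rw [integral_mul_const, hw.2.2, one_mul]

lemma le_Efun_of_le_greenPotential {c : ℝ}
    (h : ∀ x ∈ Function.support w, c ≤ greenPotential w x) : 1 / 2 * c ≤ Efun w := by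
  rw [Efun_eq]
  gcongr
  calc c = ∫ x, w x * c ∂muD := by rw [integral_mul_const, hw.2.2, one_mul]
    _ ≤ ∫ x, w x * greenPotential w x ∂muD := by
        refine integral_mono_ae ((integrable_of_mem_Kset hw).mul_const c)
          (integrable_mul_greenPotential hw) ?_
        filter_upwards [ae_nonneg_of_mem_Kset hw] with x h_w
        by_cases hx : w x = 0
        · simp only [hx, zero_mul, le_refl]
        · exact mul_le_mul_of_nonneg_left (h x hx) h_w

lemma abs_angular_term_le (Ω : ℝ) : |Ω / 2 * ∫ x in diskD, ‖x‖ ^ 2 * w x| ≤ |Ω| / 2 := by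
  have h_nonneg : 0 ≤ᵐ[muD] fun x ↦ ‖x‖ ^ 2 * w x :=
    (ae_nonneg_of_mem_Kset hw).mono fun x h ↦ mul_nonneg (sq_nonneg _) h
  have h_le : ∫ x, ‖x‖ ^ 2 * w x ∂muD ≤ 1 := by
    rw [← hw.2.2]
    refine integral_mono_of_nonneg h_nonneg (integrable_of_mem_Kset hw) ?_
    filter_upwards [ae_mem_diskD, ae_nonneg_of_mem_Kset hw] with x hx h_w
    exact mul_le_of_le_one_left h_w (pow_le_one₀ (norm_nonneg x) (mem_diskD.mp hx).le)
  rw [abs_mul, abs_div, abs_two, ← muD, abs_of_nonneg (integral_nonneg_of_ae h_nonneg)]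
  exact mul_le_of_le_one_right (by positivity) h_le

end Admissible

section Patch

/-- The radius `ε = (πλ)^{-1/2}` for which the disk of radius `ε` has area `1 / λ`. -/
def patchRadius (lam : ℝ) : ℝ := 1 / √(π * lam)

/-- The circular vortex patch `λ 1_{B_ε(0)}` of total vorticity one, the comparison function for
the lower bound. -/
def circularPatch (lam : ℝ) : E2 → ℝ := (Metric.ball 0 (patchRadius lam)).indicator fun _ ↦ lam

variable {lam : ℝ}

lemma patchRadius_pos (hlam : 0 < lam) : 0 < patchRadius lam := by
  unfold patchRadius
  positivity

lemma mul_patchRadius_sq (hlam : 0 < lam) : lam * patchRadius lam ^ 2 = 1 / π := by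
  rw [patchRadius, div_pow, Real.sq_sqrt (by positivity)]
  field_simp

variable (hlam : 1 / π ≤ lam)

include hlam

lemma pos_of_one_div_pi_le : 0 < lam := (one_div_pos.mpr Real.pi_pos).trans_le hlam

lemma patchRadius_le_one : patchRadius lam ≤ 1 :=
  div_le_one_of_le₀ (Real.one_le_sqrt.mpr ((div_le_iff₀' Real.pi_pos).mp hlam)) (Real.sqrt_nonneg _)

lemma circularPatch_mem_Kset : circularPatch lam ∈ Kset lam := by
  have hlam0 := pos_of_one_div_pi_le hlam
  have h_meas : MeasurableSet (Metric.ball (0 : E2) (patchRadius lam)) :=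
    Metric.isOpen_ball.measurableSet
  refine ⟨(measurable_const.indicator h_meas).aemeasurable, ae_of_all _ fun x ↦
    ⟨indicator_nonneg (fun _ _ ↦ hlam0.le) x, indicator_le_self' (fun _ _ ↦ hlam0.le) x⟩, ?_⟩
  rw [circularPatch, integral_indicator_const _ h_meas, muD, measureReal_restrict_apply h_meas,
    diskD, inter_eq_left.mpr (Metric.ball_subset_ball (patchRadius_le_one hlam)), measureReal_def,
    EuclideanSpace.volume_ball_fin_two, ← ENNReal.ofReal_pow (patchRadius_pos hlam0).le,
    ENNReal.toReal_mul, ENNReal.toReal_ofReal (sq_nonneg _), smul_eq_mul, mul_right_comm,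
    mul_comm _ lam, mul_patchRadius_sq hlam0,
    ENNReal.toReal_ofReal Real.pi_pos.le, one_div_mul_cancel Real.pi_ne_zero]

lemma le_greenPotential_circularPatch {x : E2} (hx : x ∈ Metric.ball 0 (patchRadius lam)) :
    1 / (2 * π) * -Real.log (2 * patchRadius lam) ≤ greenPotential (circularPatch lam) x := by
  have hlam0 := pos_of_one_div_pi_le hlam
  have hε := patchRadius_pos hlam0
  have hε1 := patchRadius_le_one hlam
  have hw := circularPatch_mem_Kset hlam
  have hxD : x ∈ diskD := Metric.ball_subset_ball hε1 hx
  set c := 1 / (2 * π) * -Real.log (2 * patchRadius lam)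
  calc c = ∫ y, c * circularPatch lam y ∂muD := by rw [integral_const_mul, hw.2.2, mul_one]
    _ ≤ greenPotential (circularPatch lam) x := by
      refine integral_mono_ae ((integrable_of_mem_Kset hw).const_mul c)
        (integrable_greenG_mul hw hxD) ?_
      filter_upwards [ae_mem_diskD, ae_muD_ne 0, ae_muD_ne x] with y hyD hy0 hyx
      by_cases hy : y ∈ Metric.ball 0 (patchRadius lam)
      · have h_norm := norm_sub_le_two_mul_imageDist hε1 (mem_ball_zero_iff.mp hx).le
          (mem_ball_zero_iff.mp hy).le
        exact mul_le_mul_of_nonneg_right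
          (neg_log_le_greenG hxD hyD hy0 hyx (by positivity) h_norm)
          (indicator_nonneg (fun _ _ ↦ hlam0.le) y)
      · simp only [circularPatch, indicator_of_notMem hy, mul_zero, le_refl]

lemma le_calE_circularPatch (Ω : ℝ) :
    -(1 / (4 * π)) * Real.log (patchRadius lam) - (1 / (4 * π) * Real.log 2 + |Ω| / 2) ≤
      calE Ω (circularPatch lam) := by
  have hw := circularPatch_mem_Kset hlam
  have h_energy := le_Efun_of_le_greenPotential hw fun x hx ↦
    le_greenPotential_circularPatch hlam (mem_of_indicator_ne_zero hx)
  have h_angular := neg_le_of_abs_le (abs_angular_term_le hw Ω)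
  have h_const : 1 / 2 * (1 / (2 * π) * -Real.log (2 * patchRadius lam)) =
      -(1 / (4 * π)) * Real.log (patchRadius lam) - 1 / (4 * π) * Real.log 2 := by
    rw [Real.log_mul two_ne_zero (patchRadius_pos (pos_of_one_div_pi_le hlam)).ne']
    ring
  unfold calE
  linarith

lemma calE_le (Ω : ℝ) {w : E2 → ℝ} (hw : w ∈ Kset lam) :
    calE Ω w ≤ -(1 / (4 * π)) * Real.log (patchRadius lam) +
      (1 / (4 * π) * (Real.log 2 + logMass / π) + |Ω| / 2) := by
  have hlam0 := pos_of_one_div_pi_le hlam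
  have h_energy := Efun_le_of_greenPotential_le hw fun x hx ↦
    greenPotential_le hw hx (patchRadius_pos hlam0) (patchRadius_le_one hlam)
  rw [← mul_assoc lam, mul_patchRadius_sq hlam0] at h_energy
  have h_angular := le_of_abs_le (abs_angular_term_le hw Ω)
  have h_const : 1 / 2 * (1 / (2 * π) * (Real.log 2 - Real.log (patchRadius lam) +
      1 / π * logMass)) = -(1 / (4 * π)) * Real.log (patchRadius lam) +
        1 / (4 * π) * (Real.log 2 + logMass / π) := by ring
  unfold calE
  linarith

end Patch

theorem stmt14_general (Ω : ℝ) :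
    ∃ C : ℝ, 0 < C ∧ ∀ lam : ℝ, 1/π ≤ lam →
      -(1/(4*π)) * Real.log (1/Real.sqrt (π*lam)) - C ≤ sSup (calE Ω '' Kset lam) ∧
      sSup (calE Ω '' Kset lam) ≤ -(1/(4*π)) * Real.log (1/Real.sqrt (π*lam)) + C := by
  have h_mass := logMass_nonneg
  refine ⟨1 / (4 * π) * (Real.log 2 + logMass / π) + |Ω| / 2, by positivity, fun lam hlam ↦ ?_⟩
  have h_patch := mem_image_of_mem (calE Ω) (circularPatch_mem_Kset hlam)
  have h_upper := fun w (hw : w ∈ Kset lam) ↦ calE_le hlam Ω hw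
  refine ⟨?_, csSup_le ⟨_, h_patch⟩ (forall_mem_image.mpr h_upper)⟩
  calc -(1 / (4 * π)) * Real.log (patchRadius lam) -
        (1 / (4 * π) * (Real.log 2 + logMass / π) + |Ω| / 2)
      ≤ -(1 / (4 * π)) * Real.log (patchRadius lam) - (1 / (4 * π) * Real.log 2 + |Ω| / 2) := by
        gcongr
        exact le_add_of_nonneg_right (by positivity)
    _ ≤ calE Ω (circularPatch lam) := le_calE_circularPatch hlam Ω
    _ ≤ sSup (calE Ω '' Kset lam) := le_csSup ⟨_, forall_mem_image.mpr h_upper⟩ h_patch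

theorem stmt14 (Ω : ℝ) (hΩ : 0 < Ω) :
    ∃ C : ℝ, 0 < C ∧ ∀ lam : ℝ, 1/π < lam →
      -(1/(4*π)) * Real.log (1/Real.sqrt (π*lam)) - C ≤ sSup (calE Ω '' Kset lam) ∧
      sSup (calE Ω '' Kset lam) ≤ -(1/(4*π)) * Real.log (1/Real.sqrt (π*lam)) + C := by
  obtain ⟨C, hC, h⟩ := stmt14_general Ω
  exact ⟨C, hC, fun lam hlam ↦ h lam hlam.le⟩
end
end

section
/- Let R > 1 and 𝒦_R = {ζ ∈ L^∞(B_R(0)) : 0 ≤ ζ ≤ 1 a.e., ∫_{B_R(0)} ζ = π}, and F(ζ) = (1/4π)∫∫_{B_R(0)×B_R(0)} (1/2π)ln|x-y|^{-1} ζ(x)ζ(y) dx dy. Then ζ* = 1_{B_1(0)} is the unique maximizer of F over the set of ζ ∈ 𝒦_R satisfying the centering condition ∫_{B_R(0)} x ζ(x) dx = 0. -/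
open MeasureTheory Real Set Filter Topology ENNReal
noncomputable section
/-- The admissible class 𝒦_R of Turkington's lemma. -/
def TK (R : ℝ) : Set (E2 → ℝ) :=
  {ζ | AEMeasurable ζ (volume.restrict (Metric.ball (0:E2) R)) ∧
    (∀ᵐ x ∂(volume.restrict (Metric.ball (0:E2) R)), 0 ≤ ζ x ∧ ζ x ≤ 1) ∧
    (∫ x in Metric.ball (0:E2) R, ζ x) = π}
/-- The logarithmic interaction energy F. -/
def TF (R : ℝ) (ζ : E2 → ℝ) : ℝ :=
  (1/(4*π)) * ∫ x in Metric.ball (0:E2) R, ∫ y in Metric.ball (0:E2) R,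
    ((1/(2*π)) * Real.log (‖x - y‖⁻¹)) * ζ x * ζ y

/-!
The self-energy `∬ log ‖x - y‖ f(x) f(y) dx dy` attains its minimum among the densities with values
in `[0, 1]` and mass `π` supported in a given disk `B`, by weak compactness in `L²`. Translations
preserve the energy, so a minimizer `f` may be assumed to have its center of mass at the origin, at
the price of moving `B`.

Fix a line through the origin with normal `n` and let `a` be the part of `f` that is odd under the
reflection in it. Polarizing `f` toward the side of the line containing the center of `B` keeps
`f` admissible, and the energy can only drop because `log` is increasing. By minimality it
does not drop, which forces `⟪n, x⟫ a(x)` to have a constant sign almost everywhere. Its integral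
vanishes because `f` is centered, hence `a = 0`: the minimizer is radially symmetric.

The mean of `log ‖x - y‖` over the circle `‖x‖ = r` is `log (max r ‖y‖)`. Hence, if `d` is the
indicator of the unit disk, the potential `U` of `f + d` is a strictly increasing function of `‖x‖`.
The difference of the energies of `f` and `d` is `∫ U (f - d)`. It is nonpositive by minimality,
whereas the bathtub principle makes it positive unless `f = d`.
-/

section Energy

variable {E : Type*} [NormedAddCommGroup E] [InnerProductSpace ℝ E] [FiniteDimensional ℝ E]
  [MeasurableSpace E] [BorelSpace E]

/-- Essentially bounded, compactly supported functions: the class on which the energy of a locally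
integrable kernel is a bilinear form. -/
structure BoundedCompactSupport (f : E → ℝ) : Prop where
  memLp_top : MemLp f ∞ volume
  hasCompactSupport : HasCompactSupport f

namespace BoundedCompactSupport

variable {f g : E → ℝ}

theorem memLp (hf : BoundedCompactSupport f) (p : ℝ≥0∞) : MemLp f p volume :=
  hf.memLp_top.mono_exponent_of_measure_support_ne_top
    (fun _ hx => image_eq_zero_of_notMem_tsupport hx)
    hf.hasCompactSupport.isCompact.measure_ne_top le_top

theorem integrable (hf : BoundedCompactSupport f) : Integrable f :=
  memLp_one_iff_integrable.1 (hf.memLp 1)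

theorem exists_ae_norm_le (hf : BoundedCompactSupport f) : ∃ C, ∀ᵐ x, ‖f x‖ ≤ C := by
  refine ⟨(eLpNormEssSup f volume).toReal, ?_⟩
  have hlt : eLpNormEssSup f volume < ∞ := by
    simpa only [eLpNorm_exponent_top] using hf.memLp_top.eLpNorm_lt_top
  filter_upwards [enorm_ae_le_eLpNormEssSup f volume] with x hx
  exact (ENNReal.ofReal_le_iff_le_toReal hlt.ne).1 (by rwa [ofReal_norm])

theorem integrable_smul {F : Type*} [NormedAddCommGroup F] [NormedSpace ℝ F]
    (hf : BoundedCompactSupport f) {u : E → F} (hu : Continuous u) :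
    Integrable fun x => f x • u x := by
  refine (integrableOn_iff_integrable_of_support_subset (s := tsupport f)
    ((Function.support_smul_subset_left f u).trans (subset_tsupport f))).1 ?_
  exact hf.integrable.integrableOn.smul_continuousOn hu.continuousOn hf.hasCompactSupport.isCompact

theorem integrable_continuous_mul (hf : BoundedCompactSupport f) {u : E → ℝ}
    (hu : Continuous u) : Integrable fun x => u x * f x := by
  simpa only [smul_eq_mul, mul_comm] using hf.integrable_smul hu

theorem add (hf : BoundedCompactSupport f) (hg : BoundedCompactSupport g) :
    BoundedCompactSupport (f + g) :=
  ⟨hf.memLp_top.add hg.memLp_top, hf.hasCompactSupport.add hg.hasCompactSupport⟩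

theorem sub (hf : BoundedCompactSupport f) (hg : BoundedCompactSupport g) :
    BoundedCompactSupport (f - g) :=
  ⟨hf.memLp_top.sub hg.memLp_top, hf.hasCompactSupport.sub hg.hasCompactSupport⟩

theorem comp_isometryEquiv (hf : BoundedCompactSupport f) (σ : E ≃ₗᵢ[ℝ] E) :
    BoundedCompactSupport (f ∘ σ) :=
  ⟨hf.memLp_top.comp_measurePreserving σ.measurePreserving,
    hf.hasCompactSupport.comp_homeomorph σ.toHomeomorph⟩

end BoundedCompactSupport

/-- The interaction energy `∬ κ(‖x - y‖) f(x) g(y) dx dy` of the radial kernel `κ`. For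
`κ = log` it is a negative multiple of `TF`, so that maximizing `TF` is minimizing the energy. -/
def energy (κ : ℝ → ℝ) (f g : E → ℝ) : ℝ :=
  ∫ z : E × E, κ ‖z.1 - z.2‖ * (f z.1 * g z.2)

/-- The potential `∫ κ(‖x - y‖) f(y) dy` generated at `x` by the density `f`: the first
variation of the energy at `f` is twice its potential. -/
def potential (κ : ℝ → ℝ) (f : E → ℝ) (x : E) : ℝ :=
  ∫ y, κ ‖x - y‖ * f y

variable {κ : ℝ → ℝ} {f g : E → ℝ}

theorem BoundedCompactSupport.integrable_kernel_mul (hκ : LocallyIntegrable fun x : E => κ ‖x‖)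
    (hg : BoundedCompactSupport g) (x : E) : Integrable fun y => κ ‖x - y‖ * g y := by
  have hpres : MeasurePreserving (fun y : E => x - y) :=
    Measure.measurePreserving_sub_left volume x
  have hon : IntegrableOn (fun y => κ ‖x - y‖) (tsupport g) :=
    (hpres.integrableOn_image (Homeomorph.subLeft x).measurableEmbedding).1
      (hκ.integrableOn_isCompact (hg.hasCompactSupport.isCompact.image (by fun_prop)))
  obtain ⟨C, hC⟩ := hg.exists_ae_norm_le
  rw [← integrableOn_iff_integrable_of_support_subset (s := tsupport g)
    ((Function.support_mul_subset_right _ _).trans (subset_tsupport g))]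
  exact hon.mul_bdd hg.memLp_top.1.restrict (ae_restrict_of_ae hC)

theorem BoundedCompactSupport.integrable_kernel_mul_prod
    (hκ : LocallyIntegrable fun x : E => κ ‖x‖)
    (hf : BoundedCompactSupport f) (hg : BoundedCompactSupport g) :
    Integrable fun z : E × E => κ ‖z.1 - z.2‖ * (f z.1 * g z.2) := by
  set K : Set E := (fun z : E × E => z.1 - z.2) '' (tsupport f ×ˢ tsupport g)
  have hK : IsCompact K :=
    (hf.hasCompactSupport.isCompact.prod hg.hasCompactSupport.isCompact).image (by fun_prop)
  have hconv : Integrable fun z : E × E =>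
      g z.2 * K.indicator (fun u => κ ‖u‖) (z.1 - z.2) :=
    hg.integrable.convolution_integrand (ContinuousLinearMap.mul ℝ ℝ)
      ((hκ.integrableOn_isCompact hK).integrable_indicator hK.measurableSet)
  obtain ⟨C, hC⟩ := hf.exists_ae_norm_le
  have hmul := hconv.mul_bdd hf.memLp_top.1.comp_fst
    (Measure.quasiMeasurePreserving_fst.ae hC)
  refine hmul.congr (ae_of_all _ fun z => ?_)
  by_cases hz : z.1 ∈ tsupport f ∧ z.2 ∈ tsupport g
  · simp only [indicator_of_mem (show z.1 - z.2 ∈ K from ⟨z, hz, rfl⟩)]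
    ring
  · rcases not_and_or.1 hz with h | h <;> simp [image_eq_zero_of_notMem_tsupport h]

theorem energy_eq_integral_mul_potential (hκ : LocallyIntegrable fun x : E => κ ‖x‖)
    (hf : BoundedCompactSupport f) (hg : BoundedCompactSupport g) :
    energy κ f g = ∫ x, f x * potential κ g x := by
  rw [energy, Measure.volume_eq_prod, integral_prod _ (hf.integrable_kernel_mul_prod hκ hg)]
  simp only [potential, ← integral_const_mul]
  congr! 4
  ring

theorem energy_comm (κ : ℝ → ℝ) (f g : E → ℝ) : energy κ f g = energy κ g f := by
  rw [energy, energy, Measure.volume_eq_prod, ← integral_prod_swap]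
  simp only [Prod.fst_swap, Prod.snd_swap, norm_sub_rev, mul_comm (f _)]

variable {h : E → ℝ}

theorem energy_add_left (hκ : LocallyIntegrable fun x : E => κ ‖x‖)
    (hf : BoundedCompactSupport f) (hg : BoundedCompactSupport g)
    (hh : BoundedCompactSupport h) :
    energy κ (f + g) h = energy κ f h + energy κ g h := by
  simp only [energy, Pi.add_apply, add_mul, mul_add]
  exact integral_add (hf.integrable_kernel_mul_prod hκ hh) (hg.integrable_kernel_mul_prod hκ hh)

theorem energy_sub_left (hκ : LocallyIntegrable fun x : E => κ ‖x‖)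
    (hf : BoundedCompactSupport f) (hg : BoundedCompactSupport g)
    (hh : BoundedCompactSupport h) :
    energy κ (f - g) h = energy κ f h - energy κ g h := by
  simp only [energy, Pi.sub_apply, sub_mul, mul_sub]
  exact integral_sub (hf.integrable_kernel_mul_prod hκ hh) (hg.integrable_kernel_mul_prod hκ hh)

theorem energy_add_right (hκ : LocallyIntegrable fun x : E => κ ‖x‖)
    (hf : BoundedCompactSupport f) (hg : BoundedCompactSupport g)
    (hh : BoundedCompactSupport h) :
    energy κ f (g + h) = energy κ f g + energy κ f h := by
  rw [energy_comm, energy_add_left hκ hg hh hf, energy_comm κ g, energy_comm κ h]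

theorem energy_sub_right (hκ : LocallyIntegrable fun x : E => κ ‖x‖)
    (hf : BoundedCompactSupport f) (hg : BoundedCompactSupport g)
    (hh : BoundedCompactSupport h) :
    energy κ f (g - h) = energy κ f g - energy κ f h := by
  rw [energy_comm, energy_sub_left hκ hg hh hf, energy_comm κ g, energy_comm κ h]

theorem energy_neg_right (κ : ℝ → ℝ) (f g : E → ℝ) : energy κ f (-g) = -energy κ f g := by
  simp only [energy, Pi.neg_apply, mul_neg, integral_neg]

theorem energy_congr {f' g' : E → ℝ} (κ : ℝ → ℝ) (hf : f =ᵐ[volume] f')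
    (hg : g =ᵐ[volume] g') : energy κ f g = energy κ f' g' := by
  refine integral_congr_ae ?_
  filter_upwards [Measure.quasiMeasurePreserving_fst.ae hf,
    Measure.quasiMeasurePreserving_snd.ae hg] with z hz₁ hz₂
  rw [hz₁, hz₂]

theorem energy_comp_isometry {τ : E → E} (hτ : Isometry τ) (hpres : MeasurePreserving τ)
    (κ : ℝ → ℝ) (f g : E → ℝ) : energy κ (f ∘ τ) (g ∘ τ) = energy κ f g := by
  have hemb := hτ.isClosedEmbedding.measurableEmbedding
  simpa only [energy, Function.comp_apply, Measure.volume_eq_prod, Prod.map, ← dist_eq_norm,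
    hτ.dist_eq] using (hpres.prod hpres).integral_comp (hemb.prodMap hemb)
      fun z : E × E => κ ‖z.1 - z.2‖ * (f z.1 * g z.2)

theorem potential_congr (κ : ℝ → ℝ) (hf : f =ᵐ[volume] g) : potential κ f = potential κ g := by
  funext x
  refine integral_congr_ae ?_
  filter_upwards [hf] with y hy
  rw [hy]

theorem potential_comp_isometry {τ : E → E} (hτ : Isometry τ) (hpres : MeasurePreserving τ)
    (κ : ℝ → ℝ) (f : E → ℝ) (x : E) : potential κ (f ∘ τ) x = potential κ f (τ x) := by
  simpa only [potential, Function.comp_apply, ← dist_eq_norm, hτ.dist_eq] using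
    hpres.integral_comp hτ.isClosedEmbedding.measurableEmbedding fun y => κ ‖τ x - y‖ * f y

theorem energy_self_sub_energy_self (hκ : LocallyIntegrable fun x : E => κ ‖x‖)
    (hf : BoundedCompactSupport f) (hg : BoundedCompactSupport g) :
    energy κ f f - energy κ g g = ∫ x, potential κ (f + g) x * (f x - g x) := by
  have hfg : energy κ (f - g) (f + g) = energy κ f f - energy κ g g := by
    rw [energy_sub_left hκ hf hg (hf.add hg), energy_add_right hκ hf hf hg,
      energy_add_right hκ hg hf hg, energy_comm κ g f]
    ring
  rw [← hfg, energy_eq_integral_mul_potential hκ (hf.sub hg) (hf.add hg)]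
  simp only [Pi.sub_apply, mul_comm]

theorem aestronglyMeasurable_potential (hκ : LocallyIntegrable fun x : E => κ ‖x‖)
    (hf : BoundedCompactSupport f) : AEStronglyMeasurable (potential κ f) volume := by
  have hker : AEStronglyMeasurable (fun z : E × E => κ ‖z.1 - z.2‖) (volume.prod volume) :=
    hκ.aestronglyMeasurable.comp_quasiMeasurePreserving
      (quasiMeasurePreserving_sub_of_right_invariant volume volume)
  exact (hker.mul hf.memLp_top.1.comp_snd).integral_prod_right'

theorem integrable_potential_mul (hκ : LocallyIntegrable fun x : E => κ ‖x‖)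
    (hf : BoundedCompactSupport f) (hg : BoundedCompactSupport g) :
    Integrable fun x => potential κ f x * g x := by
  refine (hg.integrable_kernel_mul_prod hκ hf).integral_prod_left.congr (ae_of_all _ fun x => ?_)
  simp only [potential, ← integral_mul_const]
  congr! 2
  ring

end Energy

section Reflection

variable {E : Type*} [NormedAddCommGroup E] [InnerProductSpace ℝ E]

/-- The reflection across the hyperplane through the origin orthogonal to `n` (the identity when
`n = 0`). -/
abbrev hyperplaneReflection (n : E) : E ≃ₗᵢ[ℝ] E :=
  (Submodule.span ℝ {n})ᗮ.reflection

theorem hyperplaneReflection_apply (n x : E) :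
    hyperplaneReflection n x = x - (2 * (inner ℝ n x / ‖n‖ ^ 2)) • n := by
  rw [Submodule.reflection_orthogonal_apply, Submodule.reflection_singleton_apply, mul_smul,
    two_smul, two_smul]
  simp

theorem hyperplaneReflection_neg (n : E) :
    hyperplaneReflection (-n) = hyperplaneReflection n := by
  ext x
  simp [hyperplaneReflection_apply, neg_div]

theorem inner_hyperplaneReflection (n x : E) :
    inner ℝ n (hyperplaneReflection n x) = -inner ℝ n x := by
  rw [← (hyperplaneReflection n).inner_map_map, Submodule.reflection_reflection,
    Submodule.reflection_orthogonalComplement_singleton_eq_neg, inner_neg_left]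

theorem hyperplaneReflection_of_inner_eq_zero {n x : E} (hx : inner ℝ n x = 0) :
    hyperplaneReflection n x = x := by
  simp [hyperplaneReflection_apply, hx]

theorem norm_sub_hyperplaneReflection_sq (n x y : E) :
    ‖x - hyperplaneReflection n y‖ ^ 2
      = ‖x - y‖ ^ 2 + 4 * (inner ℝ n x * inner ℝ n y) / ‖n‖ ^ 2 := by
  obtain rfl | hn := eq_or_ne n 0
  · simp [hyperplaneReflection_apply]
  have hn' : ‖n‖ ≠ 0 := norm_ne_zero_iff.2 hn
  rw [hyperplaneReflection_apply, show x - (y - (2 * (inner ℝ n y / ‖n‖ ^ 2)) • n)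
    = (x - y) + (2 * (inner ℝ n y / ‖n‖ ^ 2)) • n by abel, norm_add_sq_real, inner_smul_right,
    inner_sub_left, real_inner_comm n x, real_inner_comm n y, norm_smul, mul_pow,
    Real.norm_eq_abs, sq_abs]
  field_simp
  ring

theorem norm_sub_hyperplaneReflection_lt {n x y : E} (h : inner ℝ n x * inner ℝ n y < 0) :
    ‖x - hyperplaneReflection n y‖ < ‖x - y‖ := by
  have hn : n ≠ 0 := by rintro rfl; simp at h
  refine lt_of_pow_lt_pow_left₀ 2 (norm_nonneg _) ?_
  rw [norm_sub_hyperplaneReflection_sq]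
  have := div_neg_of_neg_of_pos (mul_neg_of_pos_of_neg (four_pos (α := ℝ)) h)
    (pow_pos (norm_pos_iff.2 hn) 2)
  linarith

theorem norm_sub_lt_norm_sub_hyperplaneReflection {n x y : E}
    (h : 0 < inner ℝ n x * inner ℝ n y) :
    ‖x - y‖ < ‖x - hyperplaneReflection n y‖ := by
  have hneg : inner ℝ n x * inner ℝ n (hyperplaneReflection n y) < 0 := by
    rwa [inner_hyperplaneReflection, mul_neg, neg_lt_zero]
  simpa only [Submodule.reflection_reflection] using norm_sub_hyperplaneReflection_lt hneg

theorem hyperplaneReflection_mem_ball {n c x : E} {R : ℝ} (hc : 0 ≤ inner ℝ n c)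
    (hx : inner ℝ n x ≤ 0) (hmem : x ∈ Metric.ball c R) :
    hyperplaneReflection n x ∈ Metric.ball c R := by
  rw [mem_ball_iff_norm'] at hmem ⊢
  refine lt_of_le_of_lt (le_of_sq_le_sq ?_ (norm_nonneg _)) hmem
  rw [norm_sub_hyperplaneReflection_sq]
  have := div_nonpos_of_nonpos_of_nonneg (mul_nonpos_of_nonneg_of_nonpos (four_pos (α := ℝ)).le
    (mul_nonpos_of_nonneg_of_nonpos hc hx)) (sq_nonneg ‖n‖)
  linarith

/-- The increase of the kernel when one of its two arguments is reflected; for an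
increasing kernel its sign tells whether the two points are on the same side of the hyperplane. -/
def reflectionDefect (κ : ℝ → ℝ) (n : E) (z : E × E) : ℝ :=
  κ ‖z.1 - hyperplaneReflection n z.2‖ - κ ‖z.1 - z.2‖

theorem sign_reflectionDefect {κ : ℝ → ℝ} (hκ : StrictMonoOn κ (Ioi 0)) (n : E) {z : E × E}
    (hz : z.1 ≠ z.2) (hz' : z.1 ≠ hyperplaneReflection n z.2) :
    SignType.sign (reflectionDefect κ n z) = SignType.sign (inner ℝ n z.1 * inner ℝ n z.2) := by
  have hpos : 0 < ‖z.1 - z.2‖ := norm_sub_pos_iff.2 hz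
  have hpos' : 0 < ‖z.1 - hyperplaneReflection n z.2‖ := norm_sub_pos_iff.2 hz'
  rcases lt_trichotomy (inner ℝ n z.1 * inner ℝ n z.2) 0 with h | h | h
  · have hlt := hκ hpos' hpos (norm_sub_hyperplaneReflection_lt h)
    rw [sign_neg h, reflectionDefect, sign_neg (sub_neg.2 hlt)]
  · have hnorm : ‖z.1 - hyperplaneReflection n z.2‖ = ‖z.1 - z.2‖ := by
      rw [← sq_eq_sq₀ (norm_nonneg _) (norm_nonneg _), norm_sub_hyperplaneReflection_sq, h]
      simp
    rw [h, reflectionDefect, hnorm, sub_self]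
  · have hlt := hκ hpos hpos' (norm_sub_lt_norm_sub_hyperplaneReflection h)
    rw [sign_pos h, reflectionDefect, sign_pos (sub_pos.2 hlt)]

end Reflection

theorem ae_prod_fst_ne_snd {α : Type*} [MeasurableSpace α] [MeasurableEq α] {μ ν : Measure α}
    [SFinite ν] [NullSingletonClass ν] : ∀ᵐ z ∂μ.prod ν, z.1 ≠ z.2 := by
  rw [ae_iff]
  simp only [not_not]
  refine (Measure.measure_prod_null measurableSet_diagonal).2 (ae_of_all _ fun x => ?_)
  exact measure_mono_null (fun y hy => Eq.symm hy) (measure_singleton x)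

theorem ae_eq_zero_of_mul_nonneg {α : Type*} [MeasurableSpace α] {μ : Measure α} [SFinite μ]
    {u : α → ℝ} (hmul : ∀ᵐ z ∂μ.prod μ, 0 ≤ u z.1 * u z.2)
    (hu : Integrable u μ) (hint : ∫ x, u x ∂μ = 0) : u =ᵐ[μ] 0 := by
  have hsq : (∫ x, |u x| ∂μ) * ∫ x, |u x| ∂μ = (∫ x, u x ∂μ) * ∫ x, u x ∂μ := by
    rw [← integral_prod_mul, ← integral_prod_mul]
    refine integral_congr_ae ?_
    filter_upwards [hmul] with z hz
    rw [← abs_mul, abs_of_nonneg hz]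
  rw [hint, mul_zero, mul_self_eq_zero,
    integral_eq_zero_iff_of_nonneg (fun x => abs_nonneg _) hu.abs] at hsq
  filter_upwards [hsq] with x hx using abs_eq_zero.1 hx

section Polarization

variable {E : Type*} [NormedAddCommGroup E] [InnerProductSpace ℝ E]

/-- The polarization of `f`: of its values at `x` and at the mirror image of `x`, the larger one is
put on the side of the hyperplane to which the normal `n` points. -/
def polarization (n : E) (f : E → ℝ) (x : E) : ℝ :=
  if 0 ≤ inner ℝ n x then max (f x) (f (hyperplaneReflection n x))
  else min (f x) (f (hyperplaneReflection n x))

variable (n : E) (f : E → ℝ)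

theorem polarization_add_comp_reflection :
    polarization n f + polarization n f ∘ hyperplaneReflection n
      = f + f ∘ hyperplaneReflection n := by
  funext x
  simp only [Pi.add_apply, Function.comp_apply, polarization, inner_hyperplaneReflection,
    Submodule.reflection_reflection]
  rcases lt_trichotomy (inner ℝ n x) 0 with hx | hx | hx
  · rw [if_neg hx.not_ge, if_pos (by linarith), max_comm, min_add_max]
  · simp [hx, hyperplaneReflection_of_inner_eq_zero hx]
  · rw [if_pos hx.le, if_neg (by linarith), min_comm, max_add_min]

theorem polarization_sub_comp_reflection :
    polarization n f - polarization n f ∘ hyperplaneReflection n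
      = fun x => SignType.sign (inner ℝ n x) * |(f - f ∘ hyperplaneReflection n) x| := by
  funext x
  simp only [Pi.sub_apply, Function.comp_apply, polarization, inner_hyperplaneReflection,
    Submodule.reflection_reflection]
  rcases lt_trichotomy (inner ℝ n x) 0 with hx | hx | hx
  · rw [if_neg hx.not_ge, if_pos (by linarith), sign_neg hx, max_comm,
      ← max_sub_min_eq_abs']
    simp
  · simp [hx, hyperplaneReflection_of_inner_eq_zero hx]
  · rw [if_pos hx.le, if_neg (by linarith), sign_pos hx, min_comm, max_sub_min_eq_abs']
    simp

end Polarization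

section PolarizationEnergy

variable {E : Type*} [NormedAddCommGroup E] [InnerProductSpace ℝ E] [FiniteDimensional ℝ E]
  [MeasurableSpace E] [BorelSpace E] {κ : ℝ → ℝ} {f : E → ℝ}

theorem BoundedCompactSupport.polarization (hf : BoundedCompactSupport f) (n : E) :
    BoundedCompactSupport (polarization n f) := by
  have hs : MeasurableSet {x : E | 0 ≤ inner ℝ n x} :=
    measurableSet_le measurable_const (by fun_prop)
  have hσ := hf.comp_isometryEquiv (hyperplaneReflection n)
  refine ⟨(MemLp.piecewise hs ((hf.memLp_top.sup hσ.memLp_top).restrict _)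
    ((hf.memLp_top.inf hσ.memLp_top).restrict _) :), ?_⟩
  refine (hf.hasCompactSupport.isCompact.union hσ.hasCompactSupport.isCompact).of_isClosed_subset
    (isClosed_tsupport _) (closure_minimal (fun x hx => ?_)
      ((isClosed_tsupport _).union (isClosed_tsupport _)))
  by_contra hout
  have hfx : f x = 0 := image_eq_zero_of_notMem_tsupport fun h => hout (Or.inl h)
  have hσx : (f ∘ hyperplaneReflection n) x = 0 :=
    image_eq_zero_of_notMem_tsupport fun h => hout (Or.inr h)
  rw [Function.comp_apply] at hσx
  exact hx (by simp [_root_.polarization, hfx, hσx])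

theorem four_mul_energy (hκ : LocallyIntegrable fun x : E => κ ‖x‖)
    (hf : BoundedCompactSupport f) (σ : E ≃ₗᵢ[ℝ] E) :
    4 * energy κ f f
      = energy κ (f + f ∘ σ) (f + f ∘ σ) + energy κ (f - f ∘ σ) (f - f ∘ σ) := by
  have hσ := hf.comp_isometryEquiv σ
  rw [energy_add_left hκ hf hσ (hf.add hσ), energy_sub_left hκ hf hσ (hf.sub hσ),
    energy_add_right hκ hf hf hσ, energy_add_right hκ hσ hf hσ, energy_sub_right hκ hf hf hσ,
    energy_sub_right hκ hσ hf hσ, energy_comp_isometry σ.isometry σ.measurePreserving]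
  ring

theorem measurePreserving_prodMap_id_reflection (n : E) :
    MeasurePreserving (Prod.map id (hyperplaneReflection n))
      (volume : Measure (E × E)) volume :=
  (MeasurePreserving.id volume).prod (hyperplaneReflection n).measurePreserving

theorem integrable_reflected_kernel_mul (hκ : LocallyIntegrable fun x : E => κ ‖x‖)
    (hf : BoundedCompactSupport f) (n : E) :
    Integrable fun z : E × E => κ ‖z.1 - hyperplaneReflection n z.2‖ * (f z.1 * f z.2) := by
  have h := (measurePreserving_prodMap_id_reflection n).integrable_comp_of_integrable
    (hf.integrable_kernel_mul_prod hκ (hf.comp_isometryEquiv (hyperplaneReflection n)))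
  simpa only [Function.comp_def, Prod.map, id, Submodule.reflection_reflection] using h

theorem integrable_reflectionDefect_mul (hκ : LocallyIntegrable fun x : E => κ ‖x‖)
    (hf : BoundedCompactSupport f) (n : E) :
    Integrable fun z : E × E => reflectionDefect κ n z * (f z.1 * f z.2) := by
  simpa only [reflectionDefect, sub_mul, Pi.sub_def] using
    (integrable_reflected_kernel_mul hκ hf n).sub (hf.integrable_kernel_mul_prod hκ hf)

theorem integral_reflectionDefect_mul (hκ : LocallyIntegrable fun x : E => κ ‖x‖)
    (hf : BoundedCompactSupport f) (n : E) :
    ∫ z, reflectionDefect κ n z * (f z.1 * f z.2)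
      = energy κ f (f ∘ hyperplaneReflection n) - energy κ f f := by
  have hrefl : ∫ z : E × E, κ ‖z.1 - hyperplaneReflection n z.2‖ * (f z.1 * f z.2)
      = energy κ f (f ∘ hyperplaneReflection n) := by
    simpa only [energy, Function.comp_apply, Prod.map, id, Submodule.reflection_reflection,
      Measure.volume_eq_prod] using
      (measurePreserving_prodMap_id_reflection n).integral_comp
        (MeasurableEmbedding.id.prodMap
          (hyperplaneReflection n).toHomeomorph.measurableEmbedding)
        fun z => κ ‖z.1 - z.2‖ * (f z.1 * f (hyperplaneReflection n z.2))
  simp only [reflectionDefect, sub_mul]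
  rw [integral_sub (integrable_reflected_kernel_mul hκ hf n)
    (hf.integrable_kernel_mul_prod hκ hf), hrefl, ← energy]

theorem two_mul_energy_of_comp_reflection_eq_neg (hκ : LocallyIntegrable fun x : E => κ ‖x‖)
    (hf : BoundedCompactSupport f) {n : E} (hodd : f ∘ hyperplaneReflection n = -f) :
    2 * energy κ f f = -∫ z, reflectionDefect κ n z * (f z.1 * f z.2) := by
  rw [integral_reflectionDefect_mul hκ hf, hodd, energy_neg_right]
  ring

theorem ae_sign_reflectionDefect [Nontrivial E] (hκ : StrictMonoOn κ (Ioi 0)) (n : E) :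
    ∀ᵐ z : E × E, SignType.sign (reflectionDefect κ n z)
      = SignType.sign (inner ℝ n z.1 * inner ℝ n z.2) := by
  filter_upwards [ae_prod_fst_ne_snd,
    (measurePreserving_prodMap_id_reflection n).quasiMeasurePreserving.ae ae_prod_fst_ne_snd]
    with z hz hz' using sign_reflectionDefect hκ n hz hz'

theorem energy_sub_energy_polarization [Nontrivial E]
    (hκ : LocallyIntegrable fun x : E => κ ‖x‖) (hmono : StrictMonoOn κ (Ioi 0))
    (hf : BoundedCompactSupport f) (n : E) {a : E → ℝ}
    (ha : a = f - f ∘ hyperplaneReflection n) :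
    8 * (energy κ f f - energy κ (polarization n f) (polarization n f))
      = ∫ z : E × E, (|reflectionDefect κ n z * (a z.1 * a z.2)|
          - reflectionDefect κ n z * (a z.1 * a z.2)) := by
  -- The energy is the sum of those of the even and the odd part under the reflection. Polarization
  -- keeps the even part and replaces the odd part `a` by `sign ⟪n, x⟫ * |a x|`.
  have hp := hf.polarization n
  set b := polarization n f - polarization n f ∘ hyperplaneReflection n with hb
  have hab : ∀ᵐ z : E × E, reflectionDefect κ n z * (b z.1 * b z.2)
      = |reflectionDefect κ n z * (a z.1 * a z.2)| := by
    filter_upwards [ae_sign_reflectionDefect hmono n] with z hz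
    rw [hb, polarization_sub_comp_reflection, ← ha, abs_mul, ← self_mul_sign, hz, sign_mul,
      abs_mul]
    push_cast
    ring
  have hodd : ∀ g : E → ℝ, (g - g ∘ hyperplaneReflection n) ∘ hyperplaneReflection n
      = -(g - g ∘ hyperplaneReflection n) := fun g => by
    funext x
    simp [Submodule.reflection_reflection]
  have haN : BoundedCompactSupport a := ha ▸ hf.sub (hf.comp_isometryEquiv _)
  have hbN : BoundedCompactSupport b := hp.sub (hp.comp_isometryEquiv _)
  have hint := integrable_reflectionDefect_mul hκ haN n
  have hEa := two_mul_energy_of_comp_reflection_eq_neg hκ haN (n := n) (ha ▸ hodd f)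
  have hEb := two_mul_energy_of_comp_reflection_eq_neg hκ hbN (hodd _)
  have hEf := four_mul_energy hκ hf (hyperplaneReflection n)
  have hEp := four_mul_energy hκ hp (hyperplaneReflection n)
  rw [polarization_add_comp_reflection] at hEp
  rw [integral_sub hint.abs hint, ← integral_congr_ae hab]
  rw [← ha] at hEf
  linarith

theorem comp_reflection_ae_eq_of_energy_le_polarization [Nontrivial E]
    (hκ : LocallyIntegrable fun x : E => κ ‖x‖) (hmono : StrictMonoOn κ (Ioi 0))
    (hf : BoundedCompactSupport f) {n : E}
    (hle : energy κ f f ≤ energy κ (polarization n f) (polarization n f))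
    (hcentered : ∫ x, inner ℝ n x * f x = 0) : f ∘ hyperplaneReflection n =ᵐ[volume] f := by
  set a := f - f ∘ hyperplaneReflection n with ha
  have hσ := hf.comp_isometryEquiv (hyperplaneReflection n)
  have hdef := energy_sub_energy_polarization hκ hmono hf n ha
  have hint := integrable_reflectionDefect_mul hκ (hf.sub hσ) n
  have habs : ∀ᵐ z : E × E, 0 ≤ reflectionDefect κ n z * (a z.1 * a z.2) := by
    have hnonneg : ∀ z : E × E, 0 ≤ |reflectionDefect κ n z * (a z.1 * a z.2)|
        - reflectionDefect κ n z * (a z.1 * a z.2) := fun z => sub_nonneg.2 (le_abs_self _)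
    have hzero := (integral_eq_zero_iff_of_nonneg hnonneg (hint.abs.sub hint)).1
      (le_antisymm (by linarith) (integral_nonneg hnonneg))
    filter_upwards [hzero] with z hz
    exact abs_eq_self.1 (sub_eq_zero.1 hz)
  have hmul : ∀ᵐ z : E × E, 0 ≤ (inner ℝ n z.1 * a z.1) * (inner ℝ n z.2 * a z.2) := by
    filter_upwards [habs, ae_sign_reflectionDefect hmono n] with z hz hsign
    rwa [mul_mul_mul_comm, ← sign_nonneg_iff, sign_mul, ← hsign, ← sign_mul, sign_nonneg_iff]
  have hσ_int : ∫ x, inner ℝ n x * f (hyperplaneReflection n x) = -∫ x, inner ℝ n x * f x := by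
    rw [← (hyperplaneReflection n).measurePreserving.integral_comp
      (hyperplaneReflection n).toHomeomorph.measurableEmbedding, ← integral_neg]
    simp only [inner_hyperplaneReflection, neg_mul, Submodule.reflection_reflection]
  have hzero : ∫ x, inner ℝ n x * a x = 0 := by
    have hcont : Continuous fun x : E => inner ℝ n x := by fun_prop
    have hsub := integral_sub (hf.integrable_continuous_mul hcont)
      (hσ.integrable_continuous_mul hcont)
    simpa only [ha, Pi.sub_apply, Function.comp_apply, mul_sub, hσ_int, hcentered, neg_zero,
      sub_zero] using hsub
  filter_upwards [ae_eq_zero_of_mul_nonneg hmul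
    ((hf.sub hσ).integrable_continuous_mul (by fun_prop)) hzero] with x hx
  rcases mul_eq_zero.1 hx with hx | hx
  · rw [Function.comp_apply, hyperplaneReflection_of_inner_eq_zero hx]
  · exact (sub_eq_zero.1 hx).symm

end PolarizationEnergy

section Density

variable {E : Type*} [NormedAddCommGroup E] [InnerProductSpace ℝ E] [FiniteDimensional ℝ E]
  [MeasurableSpace E] [BorelSpace E]

/-- Densities on `s` of total mass `m` with values in `[0, 1]`, extended by zero outside `s`. The
constraints hold pointwise; a density given up to null sets is replaced by such a representative
with `exists_isDensity_ae_eq`. -/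
structure IsDensity (s : Set E) (m : ℝ) (f : E → ℝ) : Prop where
  measurable : Measurable f
  mem_Icc : ∀ x, f x ∈ Icc 0 1
  eq_zero_of_notMem : ∀ x ∉ s, f x = 0
  integral_eq : ∫ x, f x = m

variable {s : Set E} {m : ℝ} {f : E → ℝ}

theorem isDensity_indicator {t : Set E} (hts : t ⊆ s) (ht : MeasurableSet t) :
    IsDensity s (volume.real t) (t.indicator fun _ => (1 : ℝ)) where
  measurable := measurable_const.indicator ht
  mem_Icc x := by by_cases hx : x ∈ t <;> simp [hx]
  eq_zero_of_notMem x hx := indicator_of_notMem (fun h => hx (hts h)) _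
  integral_eq := by simp [integral_indicator ht]

theorem exists_isDensity_ae_eq (hs : MeasurableSet s)
    (hf : AEMeasurable f (volume.restrict s))
    (hmem : ∀ᵐ x ∂volume.restrict s, f x ∈ Icc (0 : ℝ) 1) :
    ∃ g, IsDensity s (∫ x in s, f x) g ∧ f =ᵐ[volume.restrict s] g := by
  set g : E → ℝ := s.indicator fun x => max 0 (min 1 (hf.mk f x)) with hg
  have hfg : f =ᵐ[volume.restrict s] g := by
    filter_upwards [hf.ae_eq_mk, hmem, ae_restrict_mem hs] with x hx hx' hxs
    rw [hg, indicator_of_mem hxs, ← hx, min_eq_right hx'.2, max_eq_right hx'.1]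
  have hgmem : ∀ x, g x ∈ Icc (0 : ℝ) 1 := fun x => by
    by_cases hx : x ∈ s <;> simp [hg, hx]
  refine ⟨g, ⟨?_, hgmem, fun x hx => indicator_of_notMem hx _, ?_⟩, hfg⟩
  · exact (measurable_const.max (measurable_const.min hf.measurable_mk)).indicator hs
  · rw [integral_congr_ae hfg, setIntegral_eq_integral_of_forall_compl_eq_zero
      fun x hx => indicator_of_notMem hx _]

namespace IsDensity

theorem norm_le_one (hf : IsDensity s m f) (x : E) : ‖f x‖ ≤ 1 := by
  rw [Real.norm_of_nonneg (hf.mem_Icc x).1]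
  exact (hf.mem_Icc x).2

theorem boundedCompactSupport (hf : IsDensity s m f) (hs : Bornology.IsBounded s) :
    BoundedCompactSupport f :=
  ⟨memLp_top_of_bound hf.measurable.aestronglyMeasurable 1 (ae_of_all _ hf.norm_le_one),
    HasCompactSupport.of_support_subset_isCompact hs.isCompact_closure fun x hx =>
      subset_closure (by_contra fun hxs => hx (hf.eq_zero_of_notMem x hxs))⟩

theorem setIntegral_eq (hf : IsDensity s m f) : ∫ x in s, f x = m := by
  rw [setIntegral_eq_integral_of_forall_compl_eq_zero hf.eq_zero_of_notMem, hf.integral_eq]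

theorem setIntegral_smul_eq_integral {F : Type*} [NormedAddCommGroup F] [NormedSpace ℝ F]
    (hf : IsDensity s m f) (g : E → F) : ∫ x in s, f x • g x = ∫ x, f x • g x :=
  setIntegral_eq_integral_of_forall_compl_eq_zero fun x hx => by
    rw [hf.eq_zero_of_notMem x hx, zero_smul]

theorem setIntegral_mul_eq_integral (hf : IsDensity s m f) (g : E → ℝ) :
    ∫ x in s, f x * g x = ∫ x, f x * g x := by
  simpa only [smul_eq_mul] using hf.setIntegral_smul_eq_integral g

theorem comp_add_right {c : E} {R : ℝ} (hf : IsDensity (Metric.ball c R) m f) (p : E) :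
    IsDensity (Metric.ball (c - p) R) m (fun x => f (x + p)) where
  measurable := hf.measurable.comp (measurable_add_const p)
  mem_Icc x := hf.mem_Icc (x + p)
  eq_zero_of_notMem x hx := hf.eq_zero_of_notMem _ fun h => hx (by
    rw [mem_ball_iff_norm] at h ⊢
    rwa [sub_sub_eq_add_sub])
  integral_eq := by rw [integral_add_right_eq_self f p, hf.integral_eq]

theorem polarization {c n : E} {R : ℝ} (hf : IsDensity (Metric.ball c R) m f)
    (hn : 0 ≤ inner ℝ n c) : IsDensity (Metric.ball c R) m (polarization n f) where
  measurable := by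
    have hσ := hf.measurable.comp (hyperplaneReflection n).continuous.measurable
    exact Measurable.ite (measurableSet_le measurable_const (by fun_prop))
      (hf.measurable.max hσ) (hf.measurable.min hσ)
  mem_Icc x := by
    have h := hf.mem_Icc x
    have h' := hf.mem_Icc (hyperplaneReflection n x)
    unfold _root_.polarization
    split_ifs
    exacts [⟨le_max_of_le_left h.1, max_le h.2 h'.2⟩, ⟨le_min h.1 h'.1, min_le_of_left_le h.2⟩]
  eq_zero_of_notMem x hx := by
    unfold _root_.polarization
    split_ifs with hnx
    · have hσx : hyperplaneReflection n x ∉ Metric.ball c R := fun h => hx (by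
        simpa only [Submodule.reflection_reflection] using hyperplaneReflection_mem_ball hn
          (by rwa [inner_hyperplaneReflection, neg_nonpos]) h)
      rw [hf.eq_zero_of_notMem x hx, hf.eq_zero_of_notMem _ hσx, max_self]
    · rw [hf.eq_zero_of_notMem x hx, min_eq_left (hf.mem_Icc _).1]
  integral_eq := by
    have hN := hf.boundedCompactSupport Metric.isBounded_ball
    have hpN := hN.polarization n
    have hcomp : ∀ g : E → ℝ, ∫ x, (g ∘ hyperplaneReflection n) x = ∫ x, g x := fun g =>
      (hyperplaneReflection n).measurePreserving.integral_comp
        (hyperplaneReflection n).toHomeomorph.measurableEmbedding g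
    have hadd := congrArg (fun g : E → ℝ => ∫ x, g x) (polarization_add_comp_reflection n f)
    simp only [Pi.add_apply] at hadd
    rw [integral_add hpN.integrable (hpN.comp_isometryEquiv _).integrable,
      integral_add hN.integrable (hN.comp_isometryEquiv _).integrable, hcomp, hcomp] at hadd
    linarith [hf.integral_eq]

end IsDensity

end Density

section WeakCompactness

theorem exists_subseq_tendsto_inner {H : Type*} [NormedAddCommGroup H] [InnerProductSpace ℝ H]
    [CompleteSpace H] [TopologicalSpace.SeparableSpace H] {u : ℕ → H} {C : ℝ}
    (hu : ∀ k, ‖u k‖ ≤ C) :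
    ∃ (v : H) (φ : ℕ → ℕ), StrictMono φ ∧
      ∀ w, Tendsto (fun k => inner ℝ (u (φ k)) w) atTop (𝓝 (inner ℝ v w)) := by
  obtain ⟨ℓ, -, φ, hφ, hℓ⟩ := WeakDual.isSeqCompact_closedBall ℝ H 0 C
    (x := fun k => StrongDual.toWeakDual (InnerProductSpace.toDual ℝ H (u k)))
    (fun k => by simpa using hu k)
  refine ⟨(InnerProductSpace.toDual ℝ H).symm (WeakDual.toStrongDual ℓ), φ, hφ, fun w => ?_⟩
  rw [InnerProductSpace.toDual_symm_apply]
  exact ((WeakDual.eval_continuous w).tendsto ℓ).comp hℓ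

variable {α : Type*} [MeasurableSpace α] {μ : Measure α}

theorem inner_toLp_eq_integral_mul {w : Lp ℝ 2 μ} {f g : α → ℝ} (hw : w =ᵐ[μ] f)
    (hg : MemLp g 2 μ) : inner ℝ w hg.toLp = ∫ x, f x * g x ∂μ := by
  rw [L2.inner_def]
  refine integral_congr_ae ?_
  filter_upwards [hw, hg.coeFn_toLp] with x hx hx'
  rw [hx, hx', RCLike.inner_apply, conj_trivial, mul_comm]

theorem setIntegral_mem_Icc [IsFiniteMeasure μ] {f : α → ℝ} (hf : Integrable f μ)
    (hmem : ∀ᵐ x ∂μ, f x ∈ Icc (0 : ℝ) 1) (A : Set α) :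
    ∫ x in A, f x ∂μ ∈ Icc 0 (μ.real A) := by
  have hae := ae_restrict_of_ae (s := A) hmem
  refine ⟨integral_nonneg_of_ae (hae.mono fun x hx => hx.1), ?_⟩
  simpa using integral_mono_ae hf.integrableOn (integrable_const 1) (hae.mono fun x hx => hx.2)

theorem ae_mem_Icc_of_tendsto_setIntegral [IsFiniteMeasure μ] {u : ℕ → α → ℝ} {f : α → ℝ}
    (hu : ∀ k, Integrable (u k) μ) (hmem : ∀ k, ∀ᵐ x ∂μ, u k x ∈ Icc (0 : ℝ) 1)
    (hf : Integrable f μ) (hlim : ∀ A, MeasurableSet A →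
      Tendsto (fun k => ∫ x in A, u k x ∂μ) atTop (𝓝 (∫ x in A, f x ∂μ))) :
    ∀ᵐ x ∂μ, f x ∈ Icc (0 : ℝ) 1 := by
  have hset : ∀ A, MeasurableSet A → ∫ x in A, f x ∂μ ∈ Icc 0 (μ.real A) := fun A hA =>
    isClosed_Icc.mem_of_tendsto (hlim A hA)
      (Eventually.of_forall fun k => setIntegral_mem_Icc (hu k) (hmem k) A)
  filter_upwards [ae_nonneg_of_forall_setIntegral_nonneg hf fun A hA _ => (hset A hA).1,
    ae_le_of_forall_setIntegral_le hf (integrable_const 1) fun A hA _ => by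
      simpa using (hset A hA).2] with x h₀ h₁ using ⟨h₀, h₁⟩

theorem exists_subseq_tendsto_integral_mul [IsFiniteMeasure μ] [IsSeparable μ] {u : ℕ → α → ℝ}
    (hu : ∀ k, AEStronglyMeasurable (u k) μ) (hmem : ∀ k, ∀ᵐ x ∂μ, u k x ∈ Icc (0 : ℝ) 1) :
    ∃ f : α → ℝ, AEStronglyMeasurable f μ ∧ (∀ᵐ x ∂μ, f x ∈ Icc (0 : ℝ) 1) ∧
      ∃ φ : ℕ → ℕ, StrictMono φ ∧ ∀ g, MemLp g 2 μ →
        Tendsto (fun k => ∫ x, u (φ k) x * g x ∂μ) atTop (𝓝 (∫ x, f x * g x ∂μ)) := by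
  have hbound : ∀ k, ∀ᵐ x ∂μ, ‖u k x‖ ≤ 1 := fun k => by
    filter_upwards [hmem k] with x hx
    rw [Real.norm_of_nonneg hx.1]
    exact hx.2
  have hLp : ∀ k, MemLp (u k) 2 μ := fun k => MemLp.of_bound (hu k) 1 (hbound k)
  have : Fact ((2 : ℝ≥0∞) ≠ ∞) := ⟨ofNat_ne_top⟩
  obtain ⟨v, φ, hφ, hv⟩ := exists_subseq_tendsto_inner (u := fun k => (hLp k).toLp) fun k =>
    Lp.norm_le_of_ae_bound zero_le_one (by
      filter_upwards [(hLp k).coeFn_toLp, hbound k] with x hx hx'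
      rwa [hx])
  have hconv : ∀ g, MemLp g 2 μ →
      Tendsto (fun k => ∫ x, u (φ k) x * g x ∂μ) atTop (𝓝 (∫ x, v x * g x ∂μ)) := fun g hg => by
    simpa only [inner_toLp_eq_integral_mul (hLp _).coeFn_toLp,
      inner_toLp_eq_integral_mul (ae_eq_refl v)] using hv hg.toLp
  refine ⟨v, (Lp.memLp v).1, ae_mem_Icc_of_tendsto_setIntegral
    (fun k => (hLp (φ k)).integrable one_le_two) (fun k => hmem (φ k))
    ((Lp.memLp v).integrable one_le_two) fun A hA => ?_, φ, hφ, hconv⟩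
  simpa only [← indicator_mul_right, mul_one, integral_indicator hA] using
    hconv _ (memLp_indicator_const 2 hA 1 (Or.inr (measure_ne_top μ A)))

end WeakCompactness

section Minimizer

variable {E : Type*} [NormedAddCommGroup E] [InnerProductSpace ℝ E] [FiniteDimensional ℝ E]
  [MeasurableSpace E] [BorelSpace E] {κ : ℝ → ℝ} {s : Set E} {m : ℝ}

theorem IsDensity.exists_subseq_tendsto_integral_mul (hs : MeasurableSet s)
    (hb : Bornology.IsBounded s) {u : ℕ → E → ℝ} (hu : ∀ k, IsDensity s m (u k)) :
    ∃ f, IsDensity s m f ∧ ∃ φ : ℕ → ℕ, StrictMono φ ∧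
      ∀ g, MemLp g 2 (volume.restrict s) →
        Tendsto (fun k => ∫ x, u (φ k) x * g x) atTop (𝓝 (∫ x, f x * g x)) := by
  have : Fact (volume s < ∞) := ⟨hb.measure_lt_top⟩
  obtain ⟨f, hf, hmem, φ, hφ, hlim⟩ :=
    _root_.exists_subseq_tendsto_integral_mul (μ := volume.restrict s)
      (fun k => (hu k).measurable.aestronglyMeasurable) fun k => ae_of_all _ (hu k).mem_Icc
  obtain ⟨g, hg, hfg⟩ := exists_isDensity_ae_eq hs hf.aemeasurable hmem
  have hmass : ∫ x in s, f x = m := by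
    have h := hlim _ (memLp_const 1)
    simp only [mul_one, (hu _).setIntegral_eq] at h
    exact tendsto_nhds_unique h tendsto_const_nhds
  rw [hmass] at hg
  refine ⟨g, hg, φ, hφ, fun w hw => ?_⟩
  have hfgw : ∫ x in s, f x * w x = ∫ x, g x * w x := by
    rw [← hg.setIntegral_mul_eq_integral w]
    exact integral_congr_ae (hfg.mul (ae_eq_refl w))
  simpa only [hfgw, (hu _).setIntegral_mul_eq_integral w] using hlim w hw

theorem locallyIntegrable_of_memLp_ball {f : E → ℝ}
    (hf : ∀ r, MemLp f 2 (volume.restrict (Metric.ball 0 r))) : LocallyIntegrable f := fun x =>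
  have : Fact (volume (Metric.ball (0 : E) (‖x‖ + 1)) < ∞) := ⟨measure_ball_lt_top⟩
  ⟨Metric.ball 0 (‖x‖ + 1), Metric.isOpen_ball.mem_nhds (by simp),
    (hf _).integrable one_le_two⟩

theorem memLp_kernel (hκ : ∀ r, MemLp (fun x : E => κ ‖x‖) 2 (volume.restrict (Metric.ball 0 r)))
    (hb : Bornology.IsBounded s) (x : E) :
    MemLp (fun y => κ ‖x - y‖) 2 (volume.restrict s) := by
  obtain ⟨r, hr⟩ := hb.subset_ball x
  have hpres := (Measure.measurePreserving_sub_left volume x).restrict_preimage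
    (measurableSet_ball (x := (0 : E)) (ε := r))
  refine ((hκ r).comp_measurePreserving hpres).mono_measure (Measure.restrict_mono ?_ le_rfl)
  intro y hy
  simpa [dist_eq_norm, norm_sub_rev] using hr hy

theorem exists_forall_norm_potential_le (hκ : LocallyIntegrable fun x : E => κ ‖x‖) {t : Set E}
    (hb : Bornology.IsBounded s) (ht : Bornology.IsBounded t) (B : ℝ) :
    ∃ C, ∀ f : E → ℝ, (∀ᵐ y, ‖f y‖ ≤ B) → (∀ y ∉ s, f y = 0) →
      ∀ x ∈ t, ‖potential κ f x‖ ≤ C := by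
  obtain ⟨r, hr⟩ := hb.subset_ball 0
  obtain ⟨r', hr'⟩ := ht.subset_ball 0
  set K : Set E := Metric.closedBall 0 (r' + r)
  set k : E → ℝ := K.indicator fun u => ‖κ ‖u‖‖
  have hk : Integrable k :=
    IntegrableOn.integrable_indicator
      (hκ.integrableOn_isCompact (isCompact_closedBall 0 (r' + r))).norm measurableSet_closedBall
  refine ⟨∫ u, k u * B, fun f hf hzero x hx => ?_⟩
  rw [← integral_sub_left_eq_self (fun u => k u * B) volume x]
  refine norm_integral_le_of_norm_le ((hk.mul_const B).comp_sub_left x) (hf.mono fun y hfy => ?_)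
  by_cases hy : y ∈ s
  · have hxy : x - y ∈ K := mem_closedBall_zero_iff.2 <| (norm_sub_le x y).trans <|
      add_le_add (mem_ball_zero_iff.1 (hr' hx)).le (mem_ball_zero_iff.1 (hr hy)).le
    rw [show k (x - y) = ‖κ ‖x - y‖‖ from indicator_of_mem hxy _, norm_mul]
    exact mul_le_mul_of_nonneg_left hfy (norm_nonneg _)
  · rw [hzero y hy, mul_zero, norm_zero]
    exact mul_nonneg (indicator_nonneg (fun u _ => norm_nonneg _) _) ((norm_nonneg _).trans hfy)

theorem exists_forall_isDensity_norm_potential_le (hκ : LocallyIntegrable fun x : E => κ ‖x‖)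
    (hb : Bornology.IsBounded s) (m : ℝ) :
    ∃ C, ∀ f, IsDensity s m f → ∀ x ∈ s, ‖potential κ f x‖ ≤ C := by
  obtain ⟨C, hC⟩ := exists_forall_norm_potential_le hκ hb hb 1
  exact ⟨C, fun f hf => hC f (ae_of_all _ hf.norm_le_one) hf.eq_zero_of_notMem⟩

theorem tendsto_setIntegral_mul_potential_sub
    (hκ : ∀ r, MemLp (fun x : E => κ ‖x‖) 2 (volume.restrict (Metric.ball 0 r)))
    (hs : MeasurableSet s) (hb : Bornology.IsBounded s) {u : ℕ → E → ℝ} {f : E → ℝ}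
    (hu : ∀ k, IsDensity s m (u k)) (hf : IsDensity s m f)
    (hlim : ∀ g, MemLp g 2 (volume.restrict s) →
      Tendsto (fun k => ∫ x, u k x * g x) atTop (𝓝 (∫ x, f x * g x))) :
    Tendsto (fun k => ∫ x in s, u k x * (potential κ (u k) x - potential κ f x)) atTop (𝓝 0) := by
  have : Fact (volume s < ∞) := ⟨hb.measure_lt_top⟩
  have hloc := locallyIntegrable_of_memLp_ball hκ
  obtain ⟨C, hC⟩ := exists_forall_isDensity_norm_potential_le hloc hb m
  have hpot : ∀ x, Tendsto (fun k => potential κ (u k) x) atTop (𝓝 (potential κ f x)) := fun x => by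
    simpa only [potential, mul_comm (κ _)] using hlim _ (memLp_kernel hκ hb x)
  have hmeas : ∀ {g : E → ℝ}, IsDensity s m g →
      AEStronglyMeasurable (potential κ g) (volume.restrict s) := fun hg =>
    (aestronglyMeasurable_potential hloc (hg.boundedCompactSupport hb)).restrict
  rw [← integral_zero E ℝ (μ := volume.restrict s)]
  refine tendsto_integral_of_dominated_convergence (fun _ => C + C)
    (fun k => (hu k).measurable.aestronglyMeasurable.mul ((hmeas (hu k)).sub (hmeas hf)))
    (integrable_const _) (fun k => (ae_restrict_mem hs).mono fun x hx => ?_)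
    (ae_of_all _ fun x => ?_)
  · rw [norm_mul]
    exact (mul_le_of_le_one_left (norm_nonneg _) ((hu k).norm_le_one x)).trans <|
      (norm_sub_le _ _).trans (add_le_add (hC _ (hu k) x hx) (hC f hf x hx))
  · exact bdd_le_mul_tendsto_zero' 1 (Eventually.of_forall fun k => (hu k).norm_le_one x)
      (by simpa using (hpot x).sub_const (potential κ f x))

theorem tendsto_energy_self
    (hκ : ∀ r, MemLp (fun x : E => κ ‖x‖) 2 (volume.restrict (Metric.ball 0 r)))
    (hs : MeasurableSet s) (hb : Bornology.IsBounded s) {u : ℕ → E → ℝ} {f : E → ℝ}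
    (hu : ∀ k, IsDensity s m (u k)) (hf : IsDensity s m f)
    (hlim : ∀ g, MemLp g 2 (volume.restrict s) →
      Tendsto (fun k => ∫ x, u k x * g x) atTop (𝓝 (∫ x, f x * g x))) :
    Tendsto (fun k => energy κ (u k) (u k)) atTop (𝓝 (energy κ f f)) := by
  have : Fact (volume s < ∞) := ⟨hb.measure_lt_top⟩
  have hloc := locallyIntegrable_of_memLp_ball hκ
  have hN := hf.boundedCompactSupport hb
  obtain ⟨C, hC⟩ := exists_forall_isDensity_norm_potential_le hloc hb m
  have hweak : Tendsto (fun k => ∫ x, u k x * potential κ f x) atTop (𝓝 (energy κ f f)) := by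
    rw [energy_eq_integral_mul_potential hloc hN hN]
    exact hlim _ (MemLp.of_bound (aestronglyMeasurable_potential hloc hN).restrict C
      ((ae_restrict_mem hs).mono (hC f hf)))
  refine (zero_add (energy κ f f) ▸
    (tendsto_setIntegral_mul_potential_sub hκ hs hb hu hf hlim).add hweak).congr fun k => ?_
  have hNk := (hu k).boundedCompactSupport hb
  have hint : ∀ {g : E → ℝ}, BoundedCompactSupport g →
      Integrable fun x => u k x * potential κ g x := fun hg => by
    simpa only [mul_comm] using integrable_potential_mul hloc hg hNk
  rw [(hu k).setIntegral_mul_eq_integral, energy_eq_integral_mul_potential hloc hNk hNk]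
  simp only [mul_sub]
  rw [integral_sub (hint hNk) (hint hN), sub_add_cancel]

/-- A density on `s` of mass `m` whose self-energy is least among all such densities. -/
structure IsEnergyMinimizer (κ : ℝ → ℝ) (s : Set E) (m : ℝ) (f : E → ℝ) : Prop
    extends IsDensity s m f where
  energy_le : ∀ g, IsDensity s m g → energy κ f f ≤ energy κ g g

theorem exists_isEnergyMinimizer
    (hκ : ∀ r, MemLp (fun x : E => κ ‖x‖) 2 (volume.restrict (Metric.ball 0 r)))
    (hs : MeasurableSet s) (hb : Bornology.IsBounded s) (hne : ∃ f : E → ℝ, IsDensity s m f) :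
    ∃ f, IsEnergyMinimizer κ s m f := by
  have hcompact : IsSeqCompact ((fun f : E → ℝ => energy κ f f) '' {f | IsDensity s m f}) := by
    intro e he
    choose u hu hue using he
    obtain ⟨f, hf, φ, hφ, hlim⟩ := IsDensity.exists_subseq_tendsto_integral_mul hs hb hu
    refine ⟨_, mem_image_of_mem _ hf, φ, hφ, ?_⟩
    exact (tendsto_energy_self hκ hs hb (fun k => hu (φ k)) hf hlim).congr fun k => hue (φ k)
  obtain ⟨-, ⟨f, hf, rfl⟩, hmin⟩ := hcompact.isCompact.exists_isLeast (Set.Nonempty.image _ hne)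
  exact ⟨f, hf, fun g hg => hmin (mem_image_of_mem _ hg)⟩

end Minimizer

section Symmetry

variable {E : Type*} [NormedAddCommGroup E] [InnerProductSpace ℝ E] [FiniteDimensional ℝ E]
  [MeasurableSpace E] [BorelSpace E] {κ : ℝ → ℝ} {f : E → ℝ}

/-- Almost everywhere invariance under every reflection in a hyperplane through the origin; this is
radial symmetry up to null sets. -/
def IsReflectionSymmetric (f : E → ℝ) : Prop :=
  ∀ n, f ∘ hyperplaneReflection n =ᵐ[volume] f

theorem IsReflectionSymmetric.potential_eq_of_norm_eq (hf : IsReflectionSymmetric f) {x y : E}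
    (hxy : ‖x‖ = ‖y‖) : potential κ f x = potential κ f y := by
  have hσ : hyperplaneReflection (x - y) x = y := Submodule.reflection_sub hxy
  have hcomp := potential_comp_isometry (hyperplaneReflection (x - y)).isometry
    (hyperplaneReflection (x - y)).measurePreserving κ f x
  rwa [potential_congr κ (hf (x - y)), hσ] at hcomp

theorem IsEnergyMinimizer.isReflectionSymmetric [Nontrivial E]
    (hκ : LocallyIntegrable fun x : E => κ ‖x‖) (hmono : StrictMonoOn κ (Ioi 0)) {c : E}
    {R m : ℝ} (hf : IsEnergyMinimizer κ (Metric.ball c R) m f)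
    (hcentered : ∫ x, f x • x = 0) : IsReflectionSymmetric f := by
  have hN := hf.boundedCompactSupport Metric.isBounded_ball
  intro n
  wlog hn : 0 ≤ inner ℝ n c generalizing n
  · have hneg := this (-n) (by rw [inner_neg_left]; linarith)
    rwa [hyperplaneReflection_neg] at hneg
  refine comp_reflection_ae_eq_of_energy_le_polarization hκ hmono hN
    (hf.energy_le _ (hf.toIsDensity.polarization hn)) ?_
  have hinner := integral_inner (𝕜 := ℝ) (hN.integrable_smul (u := fun x => x) continuous_id) n
  simp only [hcentered, inner_zero_right, inner_smul_right] at hinner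
  simpa only [mul_comm] using hinner

end Symmetry

section Translation

variable {E : Type*} [NormedAddCommGroup E] [InnerProductSpace ℝ E] [FiniteDimensional ℝ E]
  [MeasurableSpace E] [BorelSpace E] {κ : ℝ → ℝ} {f : E → ℝ}

theorem energy_comp_add_right (κ : ℝ → ℝ) (f g : E → ℝ) (p : E) :
    energy κ (fun x => f (x + p)) (fun x => g (x + p)) = energy κ f g :=
  energy_comp_isometry (isometry_add_right p) (measurePreserving_add_right volume p) κ f g

theorem IsEnergyMinimizer.comp_add_right {c : E} {R m : ℝ}
    (hf : IsEnergyMinimizer κ (Metric.ball c R) m f) (p : E) :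
    IsEnergyMinimizer κ (Metric.ball (c - p) R) m fun x => f (x + p) where
  toIsDensity := hf.toIsDensity.comp_add_right p
  energy_le g hg := by
    have hg' := hg.comp_add_right (-p)
    rw [sub_neg_eq_add, sub_add_cancel] at hg'
    rw [energy_comp_add_right, ← energy_comp_add_right κ g g (-p)]
    exact hf.energy_le _ hg'

theorem BoundedCompactSupport.integral_comp_add_right_smul (hf : BoundedCompactSupport f) (p : E) :
    ∫ x, f (x + p) • x = (∫ x, f x • x) - (∫ x, f x) • p := by
  have hsub := integral_sub_right_eq_self (fun x => f (x + p) • x) p (μ := volume)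
  simp only [sub_add_cancel, smul_sub] at hsub
  rw [← hsub, integral_sub (hf.integrable_smul (u := fun x => x) continuous_id)
    (hf.integrable.smul_const p), integral_smul_const]

end Translation

section LogKernel

theorem memLp_two_log_norm_ball {E : Type*} [NormedAddCommGroup E] [NormedSpace ℝ E]
    [FiniteDimensional ℝ E] [Nontrivial E] [MeasurableSpace E] [BorelSpace E] (μ : Measure E)
    [μ.IsAddHaarMeasure] (r : ℝ) :
    MemLp (fun x : E => log ‖x‖) 2 (μ.restrict (Metric.ball 0 r)) := by
  rw [memLp_two_iff_integrable_sq measurable_norm.log.aestronglyMeasurable]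
  refine (integrableOn_fun_norm_addHaar μ (f := fun t => log t ^ 2)).2 ?_
  set d := Module.finrank ℝ E - 1
  have hpow : IntegrableOn (fun t : ℝ => t ^ (-(1 / 2) : ℝ)) (Ioo 0 r) :=
    ((intervalIntegral.integrableOn_Ioo_rpow_iff (lt_max_of_lt_right one_pos)).2
      (by norm_num)).mono_set (Ioo_subset_Ioo_right (le_max_left r 1))
  -- `√t (log t)² = 16 (t^(1/4) log t^(1/4))²` is continuous up to `0`; `t^(-1/2)` is integrable.
  have hcont : Continuous fun t : ℝ => t ^ d * (16 * (√(√t) * log √(√t)) ^ 2) :=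
    (continuous_pow d).mul <| continuous_const.mul <|
      (continuous_mul_log.comp (continuous_sqrt.comp continuous_sqrt)).pow 2
  refine (integrableOn_congr_fun (fun t ht => ?_) measurableSet_Ioo).1
    (hpow.continuousOn_mul_of_subset hcont.continuousOn isCompact_Icc measurableSet_Ioo
      Ioo_subset_Icc_self)
  have ht0 : (0 : ℝ) < t := ht.1
  have hsqrt : √t * t ^ (-(1 / 2) : ℝ) = 1 := by
    rw [sqrt_eq_rpow, ← rpow_add ht0, add_neg_cancel, Real.rpow_zero]
  calc t ^ d * (16 * (√(√t) * log √(√t)) ^ 2) * t ^ (-(1 / 2) : ℝ)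
      = t ^ d * log t ^ 2 * (√t * t ^ (-(1 / 2) : ℝ)) := by
        rw [mul_pow, sq_sqrt (sqrt_nonneg t), log_sqrt (sqrt_nonneg t), log_sqrt ht0.le]
        ring
    _ = t ^ d • log t ^ 2 := by rw [hsqrt, mul_one, smul_eq_mul]

variable {E : Type*} [NormedAddCommGroup E] [InnerProductSpace ℝ E]

theorem circleAverage_log_norm_map_sub (e : ℂ ≃ₗᵢ[ℝ] E) (y : E) {r : ℝ} (hr : 0 < r) :
    circleAverage (fun z => log ‖e z - y‖) 0 r = log (max r ‖y‖) := by
  have hy : ∀ z, ‖e z - y‖ = ‖z - e.symm y‖ := fun z => by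
    rw [← e.norm_map (z - e.symm y), map_sub, e.apply_symm_apply]
  simp only [hy]
  rw [circleAverage_log_norm_sub_const_eq_log_radius_add_posLog hr.ne', zero_sub, norm_neg,
    e.symm.norm_map]
  rcases le_total ‖y‖ r with h | h
  · rw [max_eq_left h, (posLog_eq_zero_iff _).2, add_zero]
    rw [abs_of_nonneg (by positivity)]
    exact inv_mul_le_one_of_le₀ h hr.le
  · have hone : 1 ≤ r⁻¹ * ‖y‖ := by rwa [le_inv_mul_iff₀ hr, mul_one]
    rw [max_eq_right h, posLog_eq_log (hone.trans (le_abs_self _)),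
      log_mul (inv_ne_zero hr.ne') (hr.trans_le h).ne', Real.log_inv, add_neg_cancel_left]

variable [FiniteDimensional ℝ E] [MeasurableSpace E] [BorelSpace E] {f g : E → ℝ}

theorem integrable_kernel_mul_comp_circleMap {κ : ℝ → ℝ} (hmeas : Measurable κ)
    (hκ : LocallyIntegrable fun x : E => κ ‖x‖) (hf : BoundedCompactSupport f) {e : ℂ → E}
    (he : Continuous e) (c : ℂ) (r : ℝ) :
    Integrable (fun w : ℝ × E => κ ‖e (circleMap c r w.1) - w.2‖ * f w.2)
      ((volume.restrict (Ioc 0 (2 * π))).prod volume) := by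
  have he' : Continuous fun θ => e (circleMap c r θ) := he.comp (continuous_circleMap c r)
  have hker : AEStronglyMeasurable (fun w : ℝ × E => κ ‖e (circleMap c r w.1) - w.2‖ * f w.2)
      ((volume.restrict (Ioc 0 (2 * π))).prod volume) :=
    (hmeas.comp
      ((he'.comp continuous_fst).sub continuous_snd).norm.measurable).aestronglyMeasurable.mul
      hf.memLp_top.1.comp_snd
  have hnorm : LocallyIntegrable fun x : E => ‖κ ‖x‖‖ := fun x => (hκ x).norm
  obtain ⟨B, hB⟩ := hf.exists_ae_norm_le
  obtain ⟨C, hC⟩ := exists_forall_norm_potential_le (κ := fun t => ‖κ t‖) hnorm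
    hf.hasCompactSupport.isBounded
    (((isCompact_sphere c |r|).image he).isBounded) B
  rw [integrable_prod_iff hker]
  refine ⟨ae_of_all _ fun θ => hf.integrable_kernel_mul hκ (e (circleMap c r θ)),
    Integrable.of_bound hker.norm.integral_prod_right' C (ae_of_all _ fun θ => ?_)⟩
  simp only [norm_mul]
  refine hC (fun y => ‖f y‖) (by simpa only [norm_norm] using hB)
    (fun y hy => by rw [image_eq_zero_of_notMem_tsupport hy, norm_zero]) _
    (mem_image_of_mem e (circleMap_mem_sphere' c r θ))

theorem circleAverage_potential {κ : ℝ → ℝ} (hmeas : Measurable κ)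
    (hκ : LocallyIntegrable fun x : E => κ ‖x‖) (hf : BoundedCompactSupport f) {e : ℂ → E}
    (he : Continuous e) (c : ℂ) (r : ℝ) :
    circleAverage (fun z => potential κ f (e z)) c r
      = ∫ y, circleAverage (fun z => κ ‖e z - y‖) c r * f y := by
  simp only [circleAverage, potential, intervalIntegral.integral_of_le two_pi_pos.le, smul_eq_mul]
  rw [integral_integral_swap (integrable_kernel_mul_comp_circleMap hmeas hκ hf he c r),
    ← integral_const_mul]
  simp only [integral_mul_const, mul_assoc]

/-- The logarithmic potential at distance `r` from the origin of the density on the plane obtained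
by spreading `g` uniformly over the circles centered at the origin. -/
def radialLogPotential (g : E → ℝ) (r : ℝ) : ℝ :=
  ∫ y, log (max r ‖y‖) * g y

theorem strictMonoOn_radialLogPotential (hg : BoundedCompactSupport g) (hnonneg : 0 ≤ g) {a : ℝ}
    (ha : 0 < a) (hpos : ∀ y ∈ Metric.ball 0 a, 0 < g y) :
    StrictMonoOn (radialLogPotential g) (Ioi 0) := by
  intro r hr r' hr' hlt
  have hint : ∀ {t : ℝ}, 0 < t → Integrable fun y => log (max t ‖y‖) * g y := fun ht =>
    hg.integrable_continuous_mul <| (continuous_const.max continuous_norm).log fun y =>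
      (lt_max_of_lt_left ht).ne'
  rw [← sub_pos, radialLogPotential, radialLogPotential, ← integral_sub (hint hr') (hint hr)]
  simp only [← sub_mul]
  have hlog : ∀ y : E, log (max r ‖y‖) ≤ log (max r' ‖y‖) := fun y =>
    log_le_log (lt_max_of_lt_left hr) (max_le_max_right _ hlt.le)
  refine (integral_pos_iff_support_of_nonneg
    (fun y => mul_nonneg (sub_nonneg.2 (hlog y)) (hnonneg y))
    (((hint hr').sub (hint hr)).congr (ae_of_all _ fun y => (sub_mul _ _ _).symm))).2 ?_
  refine (Metric.measure_ball_pos volume 0 (lt_min ha hr')).trans_le (measure_mono fun y hy => ?_)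
  rw [mem_ball_zero_iff, lt_min_iff] at hy
  have hstrict : log (max r ‖y‖) < log (max r' ‖y‖) :=
    log_lt_log (lt_max_of_lt_left hr) (max_lt (lt_max_of_lt_left hlt) (lt_max_of_lt_left hy.2))
  exact (mul_pos (sub_pos.2 hstrict) (hpos y (mem_ball_zero_iff.2 hy.1))).ne'

end LogKernel

section Plane

theorem memLp_two_log_norm_plane (r : ℝ) :
    MemLp (fun x : E2 => log ‖x‖) 2 (volume.restrict (Metric.ball 0 r)) :=
  memLp_two_log_norm_ball volume r

theorem locallyIntegrable_log_norm : LocallyIntegrable fun x : E2 => log ‖x‖ :=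
  locallyIntegrable_of_memLp_ball memLp_two_log_norm_plane

theorem IsReflectionSymmetric.potential_log_eq {f : E2 → ℝ} (hf : BoundedCompactSupport f)
    (hsymm : IsReflectionSymmetric f) {x : E2} (hx : x ≠ 0) :
    potential log f x = radialLogPotential f ‖x‖ := by
  have hr : 0 < ‖x‖ := norm_pos_iff.2 hx
  let e : ℂ ≃ₗᵢ[ℝ] E2 := Complex.orthonormalBasisOneI.repr
  calc potential log f x = circleAverage (fun z => potential log f (e z)) 0 ‖x‖ := by
        rw [circleAverage_congr_sphere (f₂ := fun _ => potential log f x), circleAverage_const]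
        intro z hz
        refine hsymm.potential_eq_of_norm_eq ?_
        simpa using hz
    _ = radialLogPotential f ‖x‖ := by
        rw [circleAverage_potential measurable_log locallyIntegrable_log_norm hf e.continuous]
        simp only [circleAverage_log_norm_map_sub e _ hr, radialLogPotential]

end Plane

section Disk

theorem ae_eq_indicator_of_integral_mul_sub_nonpos {α : Type*} [MeasurableSpace α]
    {μ : Measure α} {s : Set α} {f h : α → ℝ} {c : ℝ} (hs : MeasurableSet s) (hμs : μ s ≠ ∞)
    (hf : Integrable f μ) (hmem : ∀ᵐ x ∂μ, f x ∈ Icc (0 : ℝ) 1) (hmass : ∫ x, f x ∂μ = μ.real s)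
    (hint : Integrable (fun x => h x * (f x - s.indicator (fun _ => 1) x)) μ)
    (hin : ∀ᵐ x ∂μ, x ∈ s → h x < c) (hout : ∀ᵐ x ∂μ, x ∉ s → c < h x)
    (hle : ∫ x, h x * (f x - s.indicator (fun _ => 1) x) ∂μ ≤ 0) :
    f =ᵐ[μ] s.indicator fun _ => 1 := by
  set d : α → ℝ := s.indicator fun _ => 1 with hd
  have hdint : Integrable d μ := (integrable_indicator_iff hs).2 (integrableOn_const hμs)
  have hzero : ∫ x, f x - d x ∂μ = 0 := by
    rw [integral_sub hf hdint, hmass, hd, ← Pi.one_def, integral_indicator_one hs, sub_self]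
  have hnonneg : 0 ≤ᵐ[μ] fun x => (h x - c) * (f x - d x) := by
    filter_upwards [hmem, hin, hout] with x hx hin hout
    by_cases hxs : x ∈ s
    · simpa [hd, hxs] using mul_nonneg_of_nonpos_of_nonpos
        (sub_nonpos.2 (hin hxs).le) (sub_nonpos.2 hx.2)
    · simpa [hd, hxs] using mul_nonneg (sub_nonneg.2 (hout hxs).le) hx.1
  have hdiff : Integrable (fun x => c * (f x - d x)) μ := (hf.sub hdint).const_mul c
  have hshift : Integrable (fun x => (h x - c) * (f x - d x)) μ := by
    simp only [sub_mul]
    exact hint.sub hdiff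
  have hle' : ∫ x, (h x - c) * (f x - d x) ∂μ ≤ 0 := by
    simp only [sub_mul]
    rwa [integral_sub hint hdiff, integral_const_mul, hzero, mul_zero, sub_zero]
  have hprod := (integral_eq_zero_iff_of_nonneg_ae hnonneg hshift).1
    (hle'.antisymm (integral_nonneg_of_ae hnonneg))
  filter_upwards [hprod, hin, hout] with x hx hin hout
  have hne : h x - c ≠ 0 := by
    by_cases hxs : x ∈ s
    exacts [(sub_neg.2 (hin hxs)).ne, (sub_pos.2 (hout hxs)).ne']
  exact sub_eq_zero.1 ((mul_eq_zero.1 hx).resolve_left hne)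

/-- The uniform density of height one on the disk of radius `a` centered at `p`. -/
abbrev diskDensity (p : E2) (a : ℝ) : E2 → ℝ :=
  (Metric.ball p a).indicator fun _ => 1

theorem diskDensity_comp_sub (p : E2) (a : ℝ) :
    (fun x => diskDensity 0 a (x - p)) = diskDensity p a := by
  funext x
  simp only [diskDensity, indicator, mem_ball_iff_norm, sub_zero]

theorem energy_diskDensity (κ : ℝ → ℝ) (p : E2) (a : ℝ) :
    energy κ (diskDensity p a) (diskDensity p a)
      = energy κ (diskDensity 0 a) (diskDensity 0 a) := by
  simpa only [← sub_eq_add_neg, diskDensity_comp_sub] using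
    energy_comp_add_right κ (diskDensity 0 a) (diskDensity 0 a) (-p)

theorem isReflectionSymmetric_diskDensity (a : ℝ) : IsReflectionSymmetric (diskDensity 0 a) :=
  fun n => ae_of_all _ fun x => by
    simp only [Function.comp_apply, diskDensity, indicator, mem_ball_zero_iff,
      LinearIsometryEquiv.norm_map]

variable {c : E2} {R a : ℝ} {f : E2 → ℝ}

theorem IsEnergyMinimizer.ae_eq_diskDensity_of_centered
    (hf : IsEnergyMinimizer log (Metric.ball c R) (volume.real (Metric.ball (0 : E2) a)) f)
    (ha : 0 < a) (hcentered : ∫ x, f x • x = 0)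
    (hle : energy log f f ≤ energy log (diskDensity 0 a) (diskDensity 0 a)) :
    f =ᵐ[volume] diskDensity 0 a := by
  set d := diskDensity 0 a with hd
  have hκ := locallyIntegrable_log_norm
  have hfB := hf.boundedCompactSupport Metric.isBounded_ball
  have hdD : IsDensity (Metric.ball 0 a) _ d := isDensity_indicator subset_rfl measurableSet_ball
  have hdB := hdD.boundedCompactSupport Metric.isBounded_ball
  have hsymm : IsReflectionSymmetric (f + d) := fun n =>
    (hf.isReflectionSymmetric hκ strictMonoOn_log hcentered n).add
      (isReflectionSymmetric_diskDensity a n)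
  have hpot : ∀ {x}, x ≠ 0 → potential log (f + d) x = radialLogPotential (f + d) ‖x‖ :=
    hsymm.potential_log_eq (hfB.add hdB)
  have hstrict : StrictMonoOn (radialLogPotential (f + d)) (Ioi 0) :=
    strictMonoOn_radialLogPotential (hfB.add hdB)
      (fun x => add_nonneg (hf.mem_Icc x).1 (hdD.mem_Icc x).1) ha fun y hy =>
        add_pos_of_nonneg_of_pos (hf.mem_Icc y).1 (by simp [hd, diskDensity, indicator_of_mem hy])
  refine ae_eq_indicator_of_integral_mul_sub_nonpos (h := potential log (f + d))
    (c := radialLogPotential (f + d) a) measurableSet_ball measure_ball_lt_top.ne hfB.integrable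
    (ae_of_all _ hf.mem_Icc) hf.integral_eq
    (integrable_potential_mul hκ (hfB.add hdB) (hfB.sub hdB)) ?_ ?_ ?_
  · filter_upwards [Measure.ae_ne volume (0 : E2)] with x hx hxa
    rw [hpot hx]
    exact hstrict (norm_pos_iff.2 hx) ha (mem_ball_zero_iff.1 hxa)
  · filter_upwards [measure_eq_zero_iff_ae_notMem.1 (Measure.addHaar_sphere volume (0 : E2) a)]
      with x hxa hx
    rw [mem_ball_zero_iff, not_lt] at hx
    have hlt : a < ‖x‖ := hx.lt_of_ne' fun h => hxa (mem_sphere_zero_iff_norm.2 h)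
    rw [hpot (norm_pos_iff.1 (ha.trans hlt))]
    exact hstrict ha (ha.trans hlt) hlt
  · rw [← energy_self_sub_energy_self hκ hfB hdB]
    exact sub_nonpos.2 hle

theorem IsEnergyMinimizer.ae_eq_diskDensity
    (hf : IsEnergyMinimizer log (Metric.ball c R) (volume.real (Metric.ball (0 : E2) a)) f)
    (ha : 0 < a) (hle : energy log f f ≤ energy log (diskDensity 0 a) (diskDensity 0 a)) :
    f =ᵐ[volume]
      diskDensity ((volume.real (Metric.ball (0 : E2) a))⁻¹ • ∫ x, f x • x) a := by
  set m := volume.real (Metric.ball (0 : E2) a)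
  have hm : m ≠ 0 :=
    (ENNReal.toReal_pos (Metric.measure_ball_pos volume 0 ha).ne' measure_ball_lt_top.ne).ne'
  set p := m⁻¹ • ∫ x, f x • x with hp
  have hcentered : ∫ x, f (x + p) • x = 0 := by
    rw [(hf.boundedCompactSupport Metric.isBounded_ball).integral_comp_add_right_smul,
      hf.integral_eq, hp, smul_inv_smul₀ hm, sub_self]
  have hae := (hf.comp_add_right p).ae_eq_diskDensity_of_centered ha hcentered
    (by rwa [energy_comp_add_right])
  have hshift := (measurePreserving_sub_right volume p).quasiMeasurePreserving.ae_eq_comp hae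
  rw [← diskDensity_comp_sub]
  filter_upwards [hshift] with x hx
  simpa using hx

theorem IsDensity.energy_diskDensity_le
    (hf : IsDensity (Metric.ball c R) (volume.real (Metric.ball (0 : E2) a)) f) (ha : 0 < a) :
    energy log (diskDensity 0 a) (diskDensity 0 a) ≤ energy log f f := by
  obtain ⟨g, hg⟩ := exists_isEnergyMinimizer memLp_two_log_norm_plane measurableSet_ball
    Metric.isBounded_ball ⟨f, hf⟩
  by_contra! hlt
  have hgf := hg.energy_le f hf
  have hdisk := hg.ae_eq_diskDensity ha (hgf.trans hlt.le)
  rw [energy_congr log hdisk hdisk, energy_diskDensity] at hgf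
  exact hlt.not_ge hgf

theorem IsDensity.ae_eq_diskDensity_of_energy_le
    (hf : IsDensity (Metric.ball c R) (volume.real (Metric.ball (0 : E2) a)) f) (ha : 0 < a)
    (hle : energy log f f ≤ energy log (diskDensity 0 a) (diskDensity 0 a)) :
    f =ᵐ[volume]
      diskDensity ((volume.real (Metric.ball (0 : E2) a))⁻¹ • ∫ x, f x • x) a :=
  IsEnergyMinimizer.ae_eq_diskDensity
    ⟨hf, fun _ hg => hle.trans (hg.energy_diskDensity_le ha)⟩ ha hle

end Disk

section Turkington

theorem volume_real_unit_disk : volume.real (Metric.ball (0 : E2) 1) = π := by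
  simp [measureReal_def, pi_nonneg]

theorem TF_congr {R : ℝ} {ζ g : E2 → ℝ} (h : ζ =ᵐ[volume.restrict (Metric.ball 0 R)] g) :
    TF R ζ = TF R g := by
  unfold TF
  congr 1
  refine integral_congr_ae ?_
  filter_upwards [h] with x hx
  refine integral_congr_ae ?_
  filter_upwards [h] with y hy
  rw [hx, hy]

theorem TF_eq_neg_energy {R m : ℝ} {g : E2 → ℝ} (hg : IsDensity (Metric.ball 0 R) m g) :
    TF R g = -(1 / (4 * π) * (1 / (2 * π))) * energy log g g := by
  have hB := hg.boundedCompactSupport Metric.isBounded_ball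
  have hinner : ∀ x, ∫ y in Metric.ball 0 R, 1 / (2 * π) * log ‖x - y‖⁻¹ * g x * g y
      = -(1 / (2 * π)) * (g x * potential log g x) := fun x => by
    have hswap : ∀ y, 1 / (2 * π) * log ‖x - y‖⁻¹ * g x * g y
        = -(1 / (2 * π)) * g x * (g y * log ‖x - y‖) := fun y => by
      rw [Real.log_inv]
      ring
    simp only [hswap]
    rw [integral_const_mul, hg.setIntegral_mul_eq_integral, mul_assoc]
    simp only [potential, mul_comm (g _)]
  simp only [TF, hinner]
  rw [integral_const_mul, hg.setIntegral_mul_eq_integral,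
    energy_eq_integral_mul_potential locallyIntegrable_log_norm hB hB]
  ring

theorem isDensity_unit_disk {R : ℝ} (hR : 1 ≤ R) :
    IsDensity (Metric.ball 0 R) π (diskDensity 0 1) :=
  volume_real_unit_disk ▸ isDensity_indicator (Metric.ball_subset_ball hR) measurableSet_ball

theorem unit_disk_mem_TK {R : ℝ} (hR : 1 ≤ R) : diskDensity 0 1 ∈ TK R :=
  have hd := isDensity_unit_disk hR
  ⟨hd.measurable.aemeasurable, ae_of_all _ hd.mem_Icc, hd.setIntegral_eq⟩

theorem integral_diskDensity_smul (a : ℝ) : ∫ x, diskDensity 0 a x • x = 0 := by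
  have : IsAddTorsionFree E2 := .of_isTorsionFree ℝ E2
  have hodd : ∀ x, diskDensity 0 a (-x) • -x = -(diskDensity 0 a x • x) := fun x => by
    simp only [diskDensity, indicator, mem_ball_zero_iff, norm_neg, smul_neg]
  rw [← self_eq_neg, ← integral_neg, ← integral_neg_eq_self]
  simp only [hodd]

theorem stmt15_general {R : ℝ} (hR : 1 ≤ R) {ζ : E2 → ℝ} (hζ : ζ ∈ TK R) :
    TF R ζ ≤ TF R (diskDensity 0 1) ∧
      (TF R ζ = TF R (diskDensity 0 1) → ζ =ᵐ[volume.restrict (Metric.ball 0 R)]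
        diskDensity (π⁻¹ • ∫ x in Metric.ball 0 R, ζ x • x) 1) := by
  obtain ⟨hmeas, hmem, hmass⟩ := hζ
  obtain ⟨g, hg, hζg⟩ := exists_isDensity_ae_eq measurableSet_ball hmeas hmem
  rw [hmass] at hg
  have hbary : ∫ x in Metric.ball 0 R, ζ x • x = ∫ x, g x • x :=
    (integral_congr_ae (hζg.smul (ae_eq_refl _))).trans (hg.setIntegral_smul_eq_integral _)
  rw [TF_congr hζg, TF_eq_neg_energy hg, TF_eq_neg_energy (isDensity_unit_disk hR), hbary]
  rw [← volume_real_unit_disk] at hg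
  have hconst : -(1 / (4 * π) * (1 / (2 * π))) < 0 := neg_neg_of_pos (by positivity)
  refine ⟨mul_le_mul_of_nonpos_left (hg.energy_diskDensity_le one_pos) hconst.le, fun h => ?_⟩
  have hdisk := hg.ae_eq_diskDensity_of_energy_le one_pos (mul_left_cancel₀ hconst.ne h).le
  rw [volume_real_unit_disk] at hdisk
  exact hζg.trans (ae_restrict_of_ae hdisk)

end Turkington

theorem stmt15 (R : ℝ) (hR : 1 < R) :
    (Set.indicator (Metric.ball (0:E2) 1) (fun _ => (1:ℝ)) ∈ TK R ∧
      (∫ x in Metric.ball (0:E2) R,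
        Set.indicator (Metric.ball (0:E2) 1) (fun _ => (1:ℝ)) x • x) = 0) ∧
    ∀ ζ ∈ TK R, (∫ x in Metric.ball (0:E2) R, ζ x • x) = 0 →
      TF R ζ ≤ TF R (Set.indicator (Metric.ball (0:E2) 1) (fun _ => (1:ℝ))) ∧
      (TF R ζ = TF R (Set.indicator (Metric.ball (0:E2) 1) (fun _ => (1:ℝ))) →
        ζ =ᵐ[volume.restrict (Metric.ball (0:E2) R)]
          Set.indicator (Metric.ball (0:E2) 1) (fun _ => (1:ℝ))) :=
  ⟨⟨unit_disk_mem_TK hR.le, ((isDensity_unit_disk hR.le).setIntegral_smul_eq_integral _).trans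
    (integral_diskDensity_smul 1)⟩, fun ζ hζ hcentered => by
    simpa only [hcentered, smul_zero] using stmt15_general hR.le hζ⟩
end
end
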